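/- There exist W₀ and a constant K such that for every W ≥ W₀, if Λ is a single cube of side W in ℤ³ containing 0, then for all E ∈ 𝓘 the averaged density of states is bounded: |ρ̄_Λ(E)| ≤ K, with K independent of W and Λ. -/

import Mathlib

open scoped BigOperators Topology
open Matrix MeasureTheory Filter

noncomputable section

/-- The discrete torus of side lengths `L i`; when each `L i` is a positive multiple of `W`,
this is a union of cubes of side `W` (containing `0`) with periodic boundary conditions. -/
abbrev Torus (L : Fin 3 → ℕ) := (i : Fin 3) → ZMod (L i)

/-- Unit lattice vector in direction `i`. -/
def unitVec (L : Fin 3 → ℕ) (i : Fin 3) : Torus L := fun j => if j = i then 1 else 0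

/-- Discrete Laplacian with periodic boundary conditions. -/
def lap (L : Fin 3 → ℕ) : Matrix (Torus L) (Torus L) ℝ :=
  Matrix.of fun x y =>
    (∑ i : Fin 3, ((if y = x + unitVec L i then (1 : ℝ) else 0) +
        (if y = x - unitVec L i then (1 : ℝ) else 0))) - (if y = x then 6 else 0)

/-- Distance to `0` in `ℤ/n`, via the minimal representative. -/
def zdist {n : ℕ} (x : ZMod n) : ℕ := min x.val (n - x.val)

/-- Euclidean distance on the torus. -/
def tdist (L : Fin 3 → ℕ) (x y : Torus L) : ℝ :=
  Real.sqrt (∑ i : Fin 3, ((zdist (x i - y i) : ℝ)) ^ 2)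

/-- The band covariance profile `J = (-W²Δ + 1)⁻¹`. -/
def Jmat (L : Fin 3 → ℕ) [∀ i, NeZero (L i)] (W : ℕ) : Matrix (Torus L) (Torus L) ℝ :=
  (((W : ℝ) ^ 2) • (-lap L) + 1)⁻¹

def mr2 (E : ℝ) : ℝ := 2 * (1 - E ^ 2 / 4)
def mi2 (E : ℝ) : ℝ := E * Real.sqrt (1 - E ^ 2 / 4)
def mr (E : ℝ) : ℝ := Real.sqrt (mr2 E)

/-- `ℰ = E/2 - i√(1 - E²/4)`. -/
def calE (E : ℝ) : ℂ := ((E / 2 : ℝ) : ℂ) - (Real.sqrt (1 - E ^ 2 / 4) : ℝ) * Complex.I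
/-- `ℰ̄ = E - ℰ = E/2 + i√(1 - E²/4)`, the complex conjugate of `ℰ`. -/
def calEbar (E : ℝ) : ℂ := ((E / 2 : ℝ) : ℂ) + (Real.sqrt (1 - E ^ 2 / 4) : ℝ) * Complex.I

/-- `C = (-W²Δ + m_r²)⁻¹`. -/
def Cmat (L : Fin 3 → ℕ) [∀ i, NeZero (L i)] (W : ℕ) (E : ℝ) : Matrix (Torus L) (Torus L) ℝ :=
  (((W : ℝ) ^ 2) • (-lap L) + mr2 E • 1)⁻¹

/-- `B = (C⁻¹ + i m_i²·Id)⁻¹`. -/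
def Bmat (L : Fin 3 → ℕ) [∀ i, NeZero (L i)] (W : ℕ) (E : ℝ) : Matrix (Torus L) (Torus L) ℂ :=
  (((Cmat L W E)⁻¹).map Complex.ofReal + (mi2 E * Complex.I) • 1)⁻¹

/-- The energy window `𝓘 = {E : η ≤ |E| ≤ 1.8}`. -/
def specI (η : ℝ) : Set ℝ := {E : ℝ | η ≤ |E| ∧ |E| ≤ 1.8}

/-- Wigner semicircle density `(1/π)√(1 - E²/4)`. -/
def rhoSC (E : ℝ) : ℝ := Real.sqrt (1 - E ^ 2 / 4) / Real.pi

/-- Real quadratic form `aᵀ M a`. -/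
def qf (L : Fin 3 → ℕ) [∀ i, NeZero (L i)] (M : Matrix (Torus L) (Torus L) ℝ)
    (a : Torus L → ℝ) : ℝ := a ⬝ᵥ M.mulVec a

/-- Sample space: one standard Gaussian for each ordered pair of sites. -/
abbrev Config (L : Fin 3 → ℕ) := (Torus L × Torus L) → ℝ

/-- Product of standard Gaussians. -/
def gaussMeas (L : Fin 3 → ℕ) [∀ i, NeZero (L i)] : Measure (Config L) :=
  Measure.pi fun _ => ProbabilityTheory.gaussianReal 0 1

/-- An (arbitrary) linear order on the sites, used to build the Hermitian matrix. -/
def siteIdx (L : Fin 3 → ℕ) [∀ i, NeZero (L i)] (x : Torus L) : ℕ :=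
  ((Fintype.equivFin (Torus L)) x).val

/-- The random band matrix: Hermitian, with centered jointly Gaussian entries of covariance
`E[H_ij H_kl] = δ_jk δ_il J_ij` (off-diagonal entries complex, diagonal entries real). -/
def Hmat (L : Fin 3 → ℕ) [∀ i, NeZero (L i)] (W : ℕ) (ω : Config L) :
    Matrix (Torus L) (Torus L) ℂ :=
  Matrix.of fun i j =>
    if i = j then ((Real.sqrt (Jmat L W i i) * ω (i, i) : ℝ) : ℂ)
    else if siteIdx L i < siteIdx L j then
      ((Real.sqrt (Jmat L W i j / 2) : ℝ) : ℂ) * ((ω (i, j) : ℂ) + Complex.I * (ω (j, i) : ℂ))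
    else
      ((Real.sqrt (Jmat L W i j / 2) : ℝ) : ℂ) * ((ω (j, i) : ℂ) - Complex.I * (ω (i, j) : ℂ))

/-- Retarded Green's function `G⁺ = (E + iε - H)⁻¹`. -/
def Green (L : Fin 3 → ℕ) [∀ i, NeZero (L i)] (W : ℕ) (E ε : ℝ) (ω : Config L) :
    Matrix (Torus L) (Torus L) ℂ :=
  (((E : ℂ) + (ε : ℂ) * Complex.I) • (1 : Matrix (Torus L) (Torus L) ℂ) - Hmat L W ω)⁻¹

/-- Averaged Green's function entry `E[(G⁺)_{xy}]`. -/
def avgGreen (L : Fin 3 → ℕ) [∀ i, NeZero (L i)] (W : ℕ) (E ε : ℝ) (x y : Torus L) : ℂ :=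
  ∫ ω, Green L W E ε ω x y ∂(gaussMeas L)

/-- Regularized averaged density of states `-(1/π) Im E[(G⁺)₀₀]`. -/
def dos (L : Fin 3 → ℕ) [∀ i, NeZero (L i)] (W : ℕ) (E ε : ℝ) : ℝ :=
  -(1 / Real.pi) * (avgGreen L W E ε 0 0).im

/-!
The bound comes from a Wegner estimate for a Hermitian Gaussian matrix `H` of size `N` whose
variance profile satisfies `J i j ≥ c / N`. On a cube of side at most `W` this holds with
`c = 1/128`: the minimum principle gives `(1 - W²Δ)⁻¹ ≥ (2 - W²Δ)⁻⁶` entrywise, and the right-hand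
side is bounded below by Fourier inversion, the zero mode contributing `2⁻⁶ / N` and all the others
at most half of that.

By the Cameron–Martin formula, translating `H` by `± u • 1` with `|u| ≤ 1 / N` costs a constant
factor, so the density of states at `E` is at most a constant times its average over the energies in
a window of width of order `1 / N`. In that window an isolated eigenvalue contributes at most `π` to
the integral of the trace of `-Im G`. If there are two eigenvalues, then interlacing gives every
one-site minor an eigenvalue `β` close to `E`, with unit eigenvector `u`. Translating `H` by
`ζ u eᵢ* + ζ̄ eᵢ u*` with `ζ` in a disc of radius of order `N ^ (-1/2)` again costs a constant
factor, and by the Schur complement it turns `Gᵢᵢ` into `(z - β) / (κ - |ζ - ζ₀|²)` for some `κ`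
and `ζ₀`; the integral over `ζ` of its negative imaginary part is a Lorentzian mass of order
`|β - E|`. Averaging over the sites gives the bound at a single site by homogeneity.

The limit `ε ↓ 0` exists because the mean of the resolvent extends to an entire function: by the
Cameron–Martin formula, a real shift of `z` by `t` multiplies the Gaussian density by
`exp (t X - t² σ² / 2)` with `X` linear, which is entire in `t`.
-/

open ProbabilityTheory
open scoped ENNReal

section ProductMeasures

variable {ι : Type*} [Fintype ι] {X : ι → Type*} [∀ i, MeasurableSpace (X i)]
  (μ : ∀ i, Measure (X i)) [∀ i, IsProbabilityMeasure (μ i)]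

lemma lintegral_pi_prod {f : ∀ i, X i → ℝ≥0∞} (hf : ∀ i, Measurable (f i)) :
    ∫⁻ x, ∏ i, f i (x i) ∂Measure.pi μ = ∏ i, ∫⁻ x, f i x ∂μ i := by
  have hindep : iIndepFun (fun i (x : ∀ i, X i) => f i (x i)) (Measure.pi μ) :=
    iIndepFun_pi fun i => (hf i).aemeasurable
  have hprod := lintegral_prod_eq_prod_lintegral_of_indepFun Finset.univ _ hindep
    fun i => (hf i).comp (measurable_pi_apply i)
  refine hprod.trans (Finset.prod_congr rfl fun i _ => ?_)
  exact (measurePreserving_eval μ i).lintegral_comp (hf i)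

lemma pi_withDensity {f : ∀ i, X i → ℝ≥0∞} (hf : ∀ i, Measurable (f i))
    [∀ i, SigmaFinite ((μ i).withDensity (f i))] :
    (Measure.pi μ).withDensity (fun x => ∏ i, f i (x i)) =
      Measure.pi fun i => (μ i).withDensity (f i) := by
  classical
  refine (Measure.pi_eq fun s hs => ?_).symm
  have hind (x : ∀ i, X i) : (Set.univ.pi s).indicator (fun x => ∏ i, f i (x i)) x =
      ∏ i, (s i).indicator (f i) (x i) := by
    by_cases hx : x ∈ Set.univ.pi s
    · rw [Set.indicator_of_mem hx]
      exact Finset.prod_congr rfl fun i _ => (Set.indicator_of_mem (hx i trivial) _).symm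
    · obtain ⟨i, hi⟩ : ∃ i, x i ∉ s i := by simpa using hx
      rw [Set.indicator_of_notMem hx]
      exact (Finset.prod_eq_zero (Finset.mem_univ i) (Set.indicator_of_notMem hi _)).symm
  rw [withDensity_apply _ (.univ_pi hs), ← lintegral_indicator (.univ_pi hs)]
  simp_rw [hind]
  rw [lintegral_pi_prod μ fun i => (hf i).indicator (hs i)]
  refine Finset.prod_congr rfl fun i _ => ?_
  rw [withDensity_apply _ (hs i), lintegral_indicator (hs i)]

lemma lintegral_pi_le_of_forall_fiber (p : ι → Prop) [DecidablePred p]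
    {f : (∀ i, X i) → ℝ≥0∞} (hf : Measurable f) {K : ℝ≥0∞}
    (h : ∀ x₀ : ∀ i, X i, ∫⁻ y, f (fun i => if hi : p i then y ⟨i, hi⟩ else x₀ i)
      ∂Measure.pi (fun i : {i // p i} => μ i) ≤ K) :
    ∫⁻ x, f x ∂Measure.pi μ ≤ K := by
  have x₁ (i : ι) : X i := (nonempty_of_isProbabilityMeasure (μ i)).some
  have hmp := (measurePreserving_piEquivPiSubtypeProd μ p).symm
  rw [← hmp.lintegral_comp_emb (MeasurableEquiv.measurableEmbedding _),
    lintegral_prod_symm' _ (by exact hf.comp (MeasurableEquiv.measurable _))]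
  calc _ ≤ ∫⁻ _y, K ∂Measure.pi (fun i : {i // ¬ p i} => μ i) := by
        refine lintegral_mono fun y => ?_
        convert h (fun i => if hi : p i then x₁ i else y ⟨i, hi⟩) using 3 with x
        congr 1
        funext i
        by_cases hi : p i <;>
          simp [hi, MeasurableEquiv.piEquivPiSubtypeProd, Equiv.piEquivPiSubtypeProd]
    _ = K := by simp

end ProductMeasures

section GaussianTranslations

/-- The standard Gaussian measure on `ι → ℝ`. -/
abbrev stdGauss (ι : Type*) [Fintype ι] : Measure (ι → ℝ) :=
  Measure.pi fun _ => gaussianReal 0 1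

lemma gaussianReal_eq_withDensity (a : ℝ) :
    gaussianReal a 1 = (gaussianReal 0 1).withDensity
      fun x => ENNReal.ofReal (Real.exp (a * x - a ^ 2 / 2)) := by
  rw [gaussianReal_of_var_ne_zero _ one_ne_zero, gaussianReal_of_var_ne_zero _ one_ne_zero,
    ← withDensity_mul _ (measurable_gaussianPDF _ _) (by fun_prop)]
  congr 1
  ext x
  simp only [Pi.mul_apply, gaussianPDF, gaussianPDFReal]
  rw [← ENNReal.ofReal_mul (by positivity), mul_assoc (Real.sqrt _)⁻¹, ← Real.exp_add]
  congr 3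
  simp only [NNReal.coe_one]
  ring

variable {ι : Type*} [Fintype ι]

/-- The Cameron–Martin density: the law of `x + v` under `stdGauss` relative to `stdGauss`. -/
def cameronMartinDensity (v x : ι → ℝ) : ℝ := Real.exp (∑ i, (v i * x i - v i ^ 2 / 2))

lemma cameronMartinDensity_nonneg (v x : ι → ℝ) : 0 ≤ cameronMartinDensity v x :=
  Real.exp_nonneg _

@[fun_prop]
lemma measurable_cameronMartinDensity (v : ι → ℝ) : Measurable (cameronMartinDensity v) := by
  unfold cameronMartinDensity; fun_prop

lemma cameronMartinDensity_eq (v x : ι → ℝ) :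
    cameronMartinDensity v x = Real.exp (-((∑ i, v i ^ 2) / 2)) * Real.exp (∑ i, v i * x i) := by
  rw [cameronMartinDensity, ← Real.exp_add, Finset.sum_sub_distrib, Finset.sum_div]
  congr 1
  ring

theorem map_add_stdGauss (v : ι → ℝ) :
    (stdGauss ι).map (fun x => x + v) =
      (stdGauss ι).withDensity fun x => ENNReal.ofReal (cameronMartinDensity v x) := by
  have hmap : (stdGauss ι).map (fun x => x + v) = Measure.pi fun i => gaussianReal (v i) 1 := by
    have := Measure.pi_map_pi (μ := fun _ : ι => gaussianReal 0 1)
      (f := fun i (x : ℝ) => x + v i) (fun i => by fun_prop)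
    simp only [gaussianReal_map_add_const, zero_add] at this
    exact this
  have hdens (x : ι → ℝ) : ENNReal.ofReal (cameronMartinDensity v x) =
      ∏ i, ENNReal.ofReal (Real.exp (v i * x i - v i ^ 2 / 2)) := by
    rw [cameronMartinDensity, Real.exp_sum,
      ENNReal.ofReal_prod_of_nonneg fun i _ => Real.exp_nonneg _]
  simp_rw [hmap, hdens, gaussianReal_eq_withDensity (v _)]
  have (i : ι) : SigmaFinite ((gaussianReal 0 1).withDensity
      fun x => ENNReal.ofReal (Real.exp (v i * x - v i ^ 2 / 2))) := by
    rw [← gaussianReal_eq_withDensity]; infer_instance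
  exact (pi_withDensity (fun _ : ι => gaussianReal 0 1)
    (f := fun i x => ENNReal.ofReal (Real.exp (v i * x - v i ^ 2 / 2)))
    fun i => by fun_prop).symm

lemma lintegral_comp_add_stdGauss (v : ι → ℝ) {f : (ι → ℝ) → ℝ≥0∞} (hf : Measurable f) :
    ∫⁻ x, f (x + v) ∂stdGauss ι =
      ∫⁻ x, ENNReal.ofReal (cameronMartinDensity v x) * f x ∂stdGauss ι := by
  rw [← lintegral_map (f := f) (g := fun x => x + v) hf (by fun_prop), map_add_stdGauss,
    lintegral_withDensity_eq_lintegral_mul _ (by fun_prop) hf]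
  rfl

lemma integral_comp_add_stdGauss {E : Type*} [NormedAddCommGroup E] [NormedSpace ℝ E]
    (v : ι → ℝ) {f : (ι → ℝ) → E} (hf : StronglyMeasurable f) :
    ∫ x, f (x + v) ∂stdGauss ι = ∫ x, cameronMartinDensity v x • f x ∂stdGauss ι := by
  rw [← integral_map (f := f) (φ := fun x => x + v) (by fun_prop) hf.aestronglyMeasurable,
    map_add_stdGauss, integral_withDensity_eq_integral_toReal_smul (by fun_prop)
      (Eventually.of_forall fun _ => ENNReal.ofReal_lt_top)]
  simp_rw [ENNReal.toReal_ofReal (cameronMartinDensity_nonneg v _)]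

lemma two_mul_exp_le_cameronMartinDensity (v x : ι → ℝ) :
    2 * Real.exp (-((∑ i, v i ^ 2) / 2)) ≤
      cameronMartinDensity v x + cameronMartinDensity (-v) x := by
  have hcosh := Real.one_le_cosh (∑ i, v i * x i)
  rw [Real.cosh_eq] at hcosh
  simp only [cameronMartinDensity_eq, Pi.neg_apply, neg_sq, neg_mul, Finset.sum_neg_distrib]
  rw [← mul_add, mul_comm]
  gcongr
  linarith

-- The linear terms of the two Cameron–Martin densities cancel in `cosh`, so no factor depends on
-- the size of `x`.
lemma lintegral_stdGauss_le_translates {v : ι → ℝ} {R : ℝ} (hR : ∑ i, v i ^ 2 ≤ 2 * R)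
    {f : (ι → ℝ) → ℝ≥0∞} (hf : Measurable f) :
    2 * ∫⁻ x, f x ∂stdGauss ι ≤ ENNReal.ofReal (Real.exp R) *
      (∫⁻ x, f (x + v) ∂stdGauss ι + ∫⁻ x, f (x - v) ∂stdGauss ι) := by
  simp_rw [sub_eq_add_neg]
  rw [lintegral_comp_add_stdGauss v hf, lintegral_comp_add_stdGauss (-v) hf,
    ← lintegral_add_left (by fun_prop), ← lintegral_const_mul' _ _ ENNReal.ofReal_ne_top,
    ← lintegral_const_mul _ hf]
  refine lintegral_mono fun x => ?_
  have hexp : Real.exp (-R) ≤ Real.exp (-((∑ i, v i ^ 2) / 2)) := Real.exp_le_exp.2 (by linarith)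
  have hdens : 2 ≤ Real.exp R * (cameronMartinDensity v x + cameronMartinDensity (-v) x) := by
    calc (2 : ℝ) = Real.exp R * (2 * Real.exp (-R)) := by
          rw [mul_left_comm, ← Real.exp_add]; simp
      _ ≤ _ := by
          gcongr
          exact le_trans (by gcongr) (two_mul_exp_le_cameronMartinDensity v x)
  rw [← add_mul, ← mul_assoc, ← ENNReal.ofReal_add (cameronMartinDensity_nonneg _ _)
    (cameronMartinDensity_nonneg _ _), ← ENNReal.ofReal_mul (Real.exp_nonneg _)]
  gcongr
  simpa using ENNReal.ofReal_le_ofReal hdens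

variable {T : Type*} [MeasurableSpace T] {τ : Measure T} [SFinite τ]

theorem measure_univ_mul_lintegral_stdGauss_le {v : T → ι → ℝ} (hv : Measurable v) {R : ℝ}
    (hR : ∀ᵐ t ∂τ, ∑ i, v t i ^ 2 ≤ 2 * R) {f : (ι → ℝ) → ℝ≥0∞} (hf : Measurable f)
    {B : ℝ≥0∞} (hadd : ∀ x, ∫⁻ t, f (x + v t) ∂τ ≤ B) (hsub : ∀ x, ∫⁻ t, f (x - v t) ∂τ ≤ B) :
    τ Set.univ * ∫⁻ x, f x ∂stdGauss ι ≤ ENNReal.ofReal (Real.exp R) * B := by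
  have hmadd : Measurable fun p : T × (ι → ℝ) => f (p.2 + v p.1) := by fun_prop
  have hmsub : Measurable fun p : T × (ι → ℝ) => f (p.2 - v p.1) := by fun_prop
  refine (ENNReal.mul_le_mul_iff_right two_ne_zero ENNReal.ofNat_ne_top).1 ?_
  calc 2 * (τ Set.univ * ∫⁻ x, f x ∂stdGauss ι) = ∫⁻ _t, 2 * ∫⁻ x, f x ∂stdGauss ι ∂τ := by
        rw [lintegral_const]; ring
    _ ≤ ∫⁻ t, ENNReal.ofReal (Real.exp R) *
        (∫⁻ x, f (x + v t) ∂stdGauss ι + ∫⁻ x, f (x - v t) ∂stdGauss ι) ∂τ :=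
        lintegral_mono_ae (hR.mono fun t ht => lintegral_stdGauss_le_translates ht hf)
    _ = ENNReal.ofReal (Real.exp R) * (∫⁻ x, (∫⁻ t, f (x + v t) ∂τ) ∂stdGauss ι +
        ∫⁻ x, (∫⁻ t, f (x - v t) ∂τ) ∂stdGauss ι) := by
        rw [lintegral_const_mul' _ _ ENNReal.ofReal_ne_top,
          lintegral_add_left hmadd.lintegral_prod_right',
          lintegral_lintegral_swap (f := fun t x => f (x + v t)) hmadd.aemeasurable,
          lintegral_lintegral_swap (f := fun t x => f (x - v t)) hmsub.aemeasurable]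
    _ ≤ ENNReal.ofReal (Real.exp R) * (∫⁻ _x, B ∂stdGauss ι + ∫⁻ _x, B ∂stdGauss ι) := by
        gcongr
        · exact hadd _
        · exact hsub _
    _ = 2 * (ENNReal.ofReal (Real.exp R) * B) := by simp; ring

-- Conditioning on the coordinates outside `p`, the translations may depend on them.
theorem measure_univ_mul_lintegral_stdGauss_le_of_local (p : ι → Prop) {R : ℝ}
    {f : (ι → ℝ) → ℝ≥0∞} (hf : Measurable f) {B : ℝ≥0∞}
    (h : ∀ x₀ : ι → ℝ, ∃ v : T → ι → ℝ, Measurable v ∧ (∀ t i, ¬ p i → v t i = 0) ∧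
      (∀ᵐ t ∂τ, ∑ i, v t i ^ 2 ≤ 2 * R) ∧ ∀ x : ι → ℝ, (∀ i, ¬ p i → x i = x₀ i) →
        ∫⁻ t, f (x + v t) ∂τ ≤ B ∧ ∫⁻ t, f (x - v t) ∂τ ≤ B) :
    τ Set.univ * ∫⁻ x, f x ∂stdGauss ι ≤ ENNReal.ofReal (Real.exp R) * B := by
  classical
  rw [← lintegral_const_mul _ hf]
  refine lintegral_pi_le_of_forall_fiber _ p (hf.const_mul _) fun x₀ => ?_
  obtain ⟨v, hv, hvp, hvR, hB⟩ := h x₀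
  let ext (y : {i // p i} → ℝ) : ι → ℝ := fun i => if hi : p i then y ⟨i, hi⟩ else x₀ i
  have hext (y) (i) (hi : ¬ p i) : ext y i = x₀ i := dif_neg hi
  have hmext : Measurable ext := by
    refine measurable_pi_lambda _ fun i => ?_
    by_cases hi : p i <;> simp only [ext, hi, dite_true, dite_false] <;> fun_prop
  have hext_add (y t) : ext (y + fun i : {i // p i} => v t i) = ext y + v t := by
    funext i; by_cases hi : p i <;> simp [ext, hi, hvp]
  have hext_sub (y t) : ext (y - fun i : {i // p i} => v t i) = ext y - v t := by
    funext i; by_cases hi : p i <;> simp [ext, hi, hvp]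
  refine (lintegral_const_mul _ (hf.comp hmext)).trans_le ?_
  refine measure_univ_mul_lintegral_stdGauss_le (v := fun t (i : {i // p i}) => v t i)
    (by fun_prop) (hvR.mono fun t ht => ?_) (hf.comp hmext) (fun y => ?_) fun y => ?_
  · refine le_trans ?_ ht
    rw [← Fintype.sum_subtype_add_sum_subtype p]
    simp only [le_add_iff_nonneg_right]
    positivity
  · simpa only [Function.comp, hext_add] using (hB _ (hext y)).1
  · simpa only [Function.comp, hext_sub] using (hB _ (hext y)).2

lemma measurePreserving_stdGauss_signed_perm (σ : Equiv.Perm ι) {s : ι → ℝ}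
    (hs : ∀ i, s i = 1 ∨ s i = -1) :
    MeasurePreserving (fun (x : ι → ℝ) i => s i * x (σ i)) (stdGauss ι) (stdGauss ι) := by
  have hperm : MeasurePreserving (fun (x : ι → ℝ) i => x (σ i)) (stdGauss ι) (stdGauss ι) := by
    convert measurePreserving_piCongrLeft (fun _ : ι => gaussianReal 0 1) σ.symm using 1
    funext x i
    simpa using
      (MeasurableEquiv.piCongrLeft_apply_apply (β := fun _ : ι => ℝ) σ.symm x (σ i)).symm
  have hsign : MeasurePreserving (fun (x : ι → ℝ) i => s i * x i) (stdGauss ι) (stdGauss ι) := by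
    refine measurePreserving_pi _ _ (f := fun i (y : ℝ) => s i * y) fun i => ⟨by fun_prop, ?_⟩
    rcases hs i with h | h
    · simp [h]
    · simp [h, gaussianReal_map_neg]
  exact hsign.comp hperm

lemma integrable_exp_linear_stdGauss (v : ι → ℝ) :
    Integrable (fun x => Real.exp (∑ i, v i * x i)) (stdGauss ι) := by
  simp_rw [Real.exp_sum]
  exact Integrable.fintype_prod (f := fun i (y : ℝ) => Real.exp (v i * y))
    fun i => integrable_exp_mul_gaussianReal (v i)

end GaussianTranslations

section Resolvent

variable {n : Type*} [Fintype n] {M : Matrix n n ℂ} {z : ℂ}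

lemma sum_norm_sq_pos {x : n → ℂ} (hx : x ≠ 0) : 0 < ∑ j, ‖x j‖ ^ 2 := by
  obtain ⟨j, hj⟩ := Function.ne_iff.1 hx
  exact Finset.sum_pos' (fun _ _ => by positivity)
    ⟨j, Finset.mem_univ j, pow_pos (norm_pos_iff.2 hj) 2⟩

lemma star_dotProduct_self_eq_sum (x : n → ℂ) : star x ⬝ᵥ x = ((∑ i, ‖x i‖ ^ 2 : ℝ) : ℂ) := by
  simp only [dotProduct, Pi.star_apply, RCLike.star_def, Complex.conj_mul']
  push_cast; rfl

lemma im_star_dotProduct_smul_sub_mulVec (hM : M.IsHermitian) (z : ℂ) (x : n → ℂ) :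
    (star x ⬝ᵥ (z • x - M *ᵥ x)).im = z.im * ∑ i, ‖x i‖ ^ 2 := by
  have hreal : (star x ⬝ᵥ M *ᵥ x).im = 0 := hM.im_star_dotProduct_mulVec_self x
  rw [dotProduct_sub, Complex.sub_im, hreal, dotProduct_smul, star_dotProduct_self_eq_sum,
    smul_eq_mul, Complex.im_mul_ofReal, sub_zero]

variable [DecidableEq n]

lemma resolvent_eq_nonsing_inv (M : Matrix n n ℂ) (z : ℂ) :
    resolvent M z = (z • (1 : Matrix n n ℂ) - M)⁻¹ := by
  rw [resolvent, nonsing_inv_eq_ringInverse, Algebra.algebraMap_eq_smul_one]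

lemma resolvent_mulVec_eq_iff (hz : z ∈ resolventSet ℂ M) {x y : n → ℂ} :
    resolvent M z *ᵥ y = x ↔ z • x - M *ᵥ x = y := by
  have hdet : IsUnit (z • (1 : Matrix n n ℂ) - M).det := by
    rwa [← isUnit_iff_isUnit_det, ← Algebra.algebraMap_eq_smul_one]
  have hshift (x : n → ℂ) : z • x - M *ᵥ x = (z • (1 : Matrix n n ℂ) - M) *ᵥ x := by
    rw [sub_mulVec, smul_mulVec, one_mulVec]
  rw [resolvent_eq_nonsing_inv, hshift]
  constructor
  · rintro rfl
    rw [mulVec_mulVec, mul_nonsing_inv _ hdet, one_mulVec]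
  · rintro rfl
    rw [mulVec_mulVec, nonsing_inv_mul _ hdet, one_mulVec]

lemma smul_sub_mulVec_resolvent_col (hz : z ∈ resolventSet ℂ M) (i : n) :
    z • (resolvent M z).col i - M *ᵥ (resolvent M z).col i = Pi.single i 1 :=
  (resolvent_mulVec_eq_iff hz).1 (mulVec_single_one _ _)

lemma resolvent_col_ne_zero (hz : z ∈ resolventSet ℂ M) (i : n) : (resolvent M z).col i ≠ 0 := by
  intro h
  simpa [h, eq_comm] using smul_sub_mulVec_resolvent_col hz i

lemma mem_resolventSet_of_im_pos (hM : M.IsHermitian) (hz : 0 < z.im) :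
    z ∈ resolventSet ℂ M := by
  rw [← not_not (a := z ∈ resolventSet ℂ M)]
  change z ∉ spectrum ℂ M
  rw [hM.spectrum_eq_image_range]
  rintro ⟨_, _, hx⟩
  simp [← hx] at hz

lemma neg_im_resolvent_diag (hM : M.IsHermitian) (hz : 0 < z.im) (i : n) :
    -(resolvent M z i i).im = z.im * ∑ j, ‖resolvent M z j i‖ ^ 2 := by
  have h := im_star_dotProduct_smul_sub_mulVec hM z ((resolvent M z).col i)
  rw [smul_sub_mulVec_resolvent_col (mem_resolventSet_of_im_pos hM hz)] at h
  simpa using h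

lemma neg_im_resolvent_diag_pos (hM : M.IsHermitian) (hz : 0 < z.im) (i : n) :
    0 < -(resolvent M z i i).im := by
  rw [neg_im_resolvent_diag hM hz]
  exact mul_pos hz (sum_norm_sq_pos (resolvent_col_ne_zero (mem_resolventSet_of_im_pos hM hz) i))

lemma norm_resolvent_diag_le (hM : M.IsHermitian) (hz : 0 < z.im) (i : n) :
    ‖resolvent M z i i‖ ≤ 1 / z.im := by
  have hpos : 0 < ‖resolvent M z i i‖ := norm_pos_iff.2 fun h => by
    simpa [h] using neg_im_resolvent_diag_pos hM hz i
  rw [le_div_iff₀ hz, ← mul_le_mul_iff_of_pos_left hpos]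
  calc ‖resolvent M z i i‖ * (‖resolvent M z i i‖ * z.im)
      = z.im * ‖resolvent M z i i‖ ^ 2 := by ring
    _ ≤ z.im * ∑ j, ‖resolvent M z j i‖ ^ 2 := by
        gcongr
        exact Finset.single_le_sum (f := fun j => ‖resolvent M z j i‖ ^ 2)
          (fun _ _ => by positivity) (Finset.mem_univ i)
    _ = -(resolvent M z i i).im := (neg_im_resolvent_diag hM hz i).symm
    _ ≤ ‖resolvent M z i i‖ * 1 := by
        rw [mul_one]; exact (neg_le_abs _).trans (Complex.abs_im_le_norm _)

lemma trace_resolvent (hM : M.IsHermitian) (hz : 0 < z.im) :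
    (resolvent M z).trace = ∑ k, (z - hM.eigenvalues k)⁻¹ := by
  have hne (k : n) : z - hM.eigenvalues k ≠ 0 := fun h => by
    simpa [hz.ne'] using congrArg Complex.im h
  let φ := Unitary.conjStarAlgAut ℂ (Matrix n n ℂ) hM.eigenvectorUnitary
  have hshift : z • (1 : Matrix n n ℂ) - M = φ (diagonal fun k => z - hM.eigenvalues k) := by
    have hdiag : (diagonal fun k => z - (hM.eigenvalues k : ℂ)) =
        z • (1 : Matrix n n ℂ) - diagonal (RCLike.ofReal ∘ hM.eigenvalues) := by
      rw [smul_one_eq_diagonal, diagonal_sub]; rfl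
    rw [hdiag, map_sub, map_smul, map_one, ← hM.spectral_theorem]
  have hinv : resolvent M z = φ (diagonal fun k => (z - hM.eigenvalues k)⁻¹) := by
    rw [resolvent_eq_nonsing_inv, hshift]
    refine inv_eq_right_inv ?_
    rw [← map_mul, diagonal_mul_diagonal]
    simp [hne]
  rw [hinv, Unitary.conjStarAlgAut_apply, trace_mul_comm, ← Matrix.mul_assoc,
    Unitary.star_mul_self_of_mem hM.eigenvectorUnitary.2, one_mul, trace_diagonal]

lemma sum_neg_im_resolvent_diag (hM : M.IsHermitian) (hz : 0 < z.im) :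
    ∑ i, -(resolvent M z i i).im =
      ∑ k, z.im / ((z.re - hM.eigenvalues k) ^ 2 + z.im ^ 2) := by
  have htrace := congrArg Complex.im (trace_resolvent hM hz)
  simp only [trace, diag, Complex.im_sum] at htrace
  rw [Finset.sum_neg_distrib, htrace, ← Finset.sum_neg_distrib]
  refine Finset.sum_congr rfl fun k _ => ?_
  rw [Complex.inv_im, Complex.normSq_apply]
  simp only [Complex.sub_im, Complex.ofReal_im, sub_zero, Complex.sub_re, Complex.ofReal_re]
  ring

end Resolvent

section ApproximateEigenvectors

variable {𝕜 F ι : Type*} [RCLike 𝕜] [NormedAddCommGroup F] [InnerProductSpace 𝕜 F] [Fintype ι]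
  {b : OrthonormalBasis ι 𝕜 F} {T : F →ₗ[𝕜] F} {l : ι → ℝ}

lemma norm_sq_map_sub_smul (hT : ∀ k, T (b k) = (l k : 𝕜) • b k) (m : ℝ) (x : F) :
    ‖T x - (m : 𝕜) • x‖ ^ 2 = ∑ k, (l k - m) ^ 2 * ‖inner 𝕜 (b k) x‖ ^ 2 := by
  have hexp : T x - (m : 𝕜) • x = ∑ k, (((l k - m : ℝ) : 𝕜) * inner 𝕜 (b k) x) • b k := by
    conv_lhs => rw [← b.sum_repr' x]
    rw [map_sum, Finset.smul_sum, ← Finset.sum_sub_distrib]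
    refine Finset.sum_congr rfl fun k _ => ?_
    rw [map_smul, hT, RCLike.ofReal_sub]
    module
  rw [← b.sum_sq_norm_inner_right, hexp]
  refine Finset.sum_congr rfl fun k _ => ?_
  rw [b.orthonormal.inner_right_fintype, norm_mul, mul_pow, RCLike.norm_ofReal, sq_abs]

lemma norm_map_sub_smul_le (hT : ∀ k, T (b k) = (l k : 𝕜) • b k) {m r : ℝ} (hr : 0 ≤ r) {x : F}
    (hx : ∀ k, r < |l k - m| → inner 𝕜 (b k) x = 0) : ‖T x - (m : 𝕜) • x‖ ≤ r * ‖x‖ := by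
  rw [← pow_le_pow_iff_left₀ (norm_nonneg _) (by positivity) two_ne_zero, mul_pow,
    norm_sq_map_sub_smul hT, ← b.sum_sq_norm_inner_right, Finset.mul_sum]
  refine Finset.sum_le_sum fun k _ => ?_
  by_cases hk : r < |l k - m|
  · simp [hx k hk]
  · exact mul_le_mul_of_nonneg_right (sq_le_sq.2 ((not_lt.1 hk).trans (le_abs_self r)))
      (by positivity)

lemma exists_abs_sub_le_of_norm_map_sub_smul_le (hT : ∀ k, T (b k) = (l k : 𝕜) • b k) {m r : ℝ}
    {x : F} (hx : x ≠ 0) (h : ‖T x - (m : 𝕜) • x‖ ≤ r * ‖x‖) : ∃ k, |l k - m| ≤ r := by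
  by_contra! hfar
  have hr : 0 ≤ r := nonneg_of_mul_nonneg_left ((norm_nonneg _).trans h) (norm_pos_iff.2 hx)
  have hsq (k) : r ^ 2 < (l k - m) ^ 2 := by rw [← sq_abs (l k - m)]; gcongr; exact hfar k
  obtain ⟨k, hk⟩ : ∃ k, inner 𝕜 (b k) x ≠ 0 := by
    by_contra! h0
    exact hx (InnerProductSpace.ext_inner_left_basis b.toBasis fun k => by simpa using h0 k)
  refine h.not_gt (lt_of_pow_lt_pow_left₀ 2 (norm_nonneg _) ?_)
  rw [mul_pow, norm_sq_map_sub_smul hT, ← b.sum_sq_norm_inner_right, Finset.mul_sum]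
  exact Finset.sum_lt_sum
    (fun k _ => mul_le_mul_of_nonneg_right (hsq k).le (by positivity))
    ⟨k, Finset.mem_univ k, mul_lt_mul_of_pos_right (hsq k) (by positivity)⟩

end ApproximateEigenvectors

section Minor

variable {n : Type*}

/-- The vector `y` with its coordinate at the site `i` deleted. -/
def eraseSite (i : n) (y : EuclideanSpace ℂ n) : EuclideanSpace ℂ {j // j ≠ i} :=
  WithLp.toLp 2 (y ∘ Subtype.val)

lemma exists_apply_eq_zero_eraseSite_eq (i : n) (w : EuclideanSpace ℂ {j // j ≠ i}) :
    ∃ u : EuclideanSpace ℂ n, u i = 0 ∧ eraseSite i u = w := by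
  refine ⟨WithLp.toLp 2 (Function.extend Subtype.val w 0),
    Function.extend_apply' _ _ _ fun ⟨j, hj⟩ => j.2 hj, ?_⟩
  ext j
  exact Subtype.val_injective.extend_apply _ _ j

variable [Fintype n] {M : Matrix n n ℂ} {i : n}

/-- `β` is an eigenvalue, with unit eigenvector `u`, of the minor of `M` obtained by deleting the
site `i`. The eigenvector is extended by `0` to all sites. -/
structure IsMinorEigenpair (M : Matrix n n ℂ) (i : n) (β : ℝ) (u : n → ℂ) : Prop where
  sum_norm_sq : ∑ j, ‖u j‖ ^ 2 = 1
  apply_self : u i = 0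
  mulVec_apply : ∀ j ≠ i, (M *ᵥ u) j = β * u j

lemma IsMinorEigenpair.star_dotProduct_self {β : ℝ} {u : n → ℂ} (h : IsMinorEigenpair M i β u) :
    star u ⬝ᵥ u = 1 := by
  rw [star_dotProduct_self_eq_sum, h.sum_norm_sq, Complex.ofReal_one]

/-- The minor of `M` at `i` has an eigenvalue within `r` of `m`. -/
def HasMinorEigenvalueNear (M : Matrix n n ℂ) (i : n) (m r : ℝ) : Prop :=
  ∃ (β : ℝ) (u : n → ℂ), |β - m| ≤ r ∧ IsMinorEigenpair M i β u

variable [DecidableEq n]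

lemma toEuclideanLin_eigenvectorBasis (hM : M.IsHermitian) (k : n) :
    toEuclideanLin M (hM.eigenvectorBasis k) =
      (hM.eigenvalues k : ℂ) • hM.eigenvectorBasis k := by
  rw [toLpLin_apply, hM.mulVec_eigenvectorBasis]
  ext j
  simp

lemma norm_sq_eq_add_norm_sq_eraseSite (i : n) (y : EuclideanSpace ℂ n) :
    ‖y‖ ^ 2 = ‖y i‖ ^ 2 + ‖eraseSite i y‖ ^ 2 := by
  rw [EuclideanSpace.norm_sq_eq, EuclideanSpace.norm_sq_eq,
    ← Fintype.sum_subtype_add_sum_subtype (fun j => j = i)]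
  simp [default, eraseSite]

lemma norm_eraseSite_le (i : n) (y : EuclideanSpace ℂ n) : ‖eraseSite i y‖ ≤ ‖y‖ := by
  rw [← pow_le_pow_iff_left₀ (norm_nonneg _) (norm_nonneg _) two_ne_zero,
    norm_sq_eq_add_norm_sq_eraseSite i y]
  exact le_add_of_nonneg_left (by positivity)

lemma norm_eraseSite_of_apply_eq_zero {y : EuclideanSpace ℂ n} (hy : y i = 0) :
    ‖eraseSite i y‖ = ‖y‖ := by
  rw [← pow_left_inj₀ (norm_nonneg _) (norm_nonneg _) two_ne_zero,
    norm_sq_eq_add_norm_sq_eraseSite i y, hy]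
  simp

lemma toEuclideanLin_submatrix_eraseSite (M : Matrix n n ℂ) {y : EuclideanSpace ℂ n}
    (hy : y i = 0) :
    toEuclideanLin (M.submatrix (Subtype.val : {j // j ≠ i} → n) Subtype.val) (eraseSite i y) =
      eraseSite i (toEuclideanLin M y) := by
  ext j
  change ∑ k : {j // j ≠ i}, M j k * y k = ∑ k, M j k * y k
  rw [← Fintype.sum_subtype_add_sum_subtype (fun k => k = i) (fun k => M j k * y k)]
  simp [default, hy]

lemma hasMinorEigenvalueNear_of_approx (hM : M.IsHermitian) {m r : ℝ} {x : EuclideanSpace ℂ n}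
    (hx : x ≠ 0) (hxi : x i = 0) (h : ‖toEuclideanLin M x - (m : ℂ) • x‖ ≤ r * ‖x‖) :
    HasMinorEigenvalueNear M i m r := by
  have hB := hM.submatrix (Subtype.val : {j // j ≠ i} → n)
  have hnorm := norm_eraseSite_of_apply_eq_zero hxi
  obtain ⟨k, hk⟩ := exists_abs_sub_le_of_norm_map_sub_smul_le
    (toEuclideanLin_eigenvectorBasis hB) (m := m) (r := r) (x := eraseSite i x)
    (norm_ne_zero_iff.1 (hnorm ▸ norm_ne_zero_iff.2 hx)) (by
      rw [toEuclideanLin_submatrix_eraseSite M hxi, hnorm]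
      exact (norm_eraseSite_le i (toEuclideanLin M x - (m : ℂ) • x)).trans h)
  obtain ⟨u, hui, hu⟩ := exists_apply_eq_zero_eraseSite_eq i (hB.eigenvectorBasis k)
  have heig := toEuclideanLin_eigenvectorBasis hB k
  rw [← hu, toEuclideanLin_submatrix_eraseSite M hui] at heig
  refine ⟨hB.eigenvalues k, u, hk, ?_, hui, fun j hj => ?_⟩
  · rw [← EuclideanSpace.norm_sq_eq, ← norm_eraseSite_of_apply_eq_zero hui, hu,
      hB.eigenvectorBasis.orthonormal.1 k, one_pow]
  · exact congrArg (fun y : EuclideanSpace ℂ {j // j ≠ i} => y ⟨j, hj⟩) heig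

-- As in Cauchy interlacing, the span of the two eigenvectors meets the hyperplane `x i = 0`.
lemma hasMinorEigenvalueNear_of_two_eigenvalues (hM : M.IsHermitian) (i : n) {m r : ℝ} {k l : n}
    (hkl : k ≠ l) (hk : |hM.eigenvalues k - m| ≤ r) (hl : |hM.eigenvalues l - m| ≤ r) :
    HasMinorEigenvalueNear M i m r := by
  let b := hM.eigenvectorBasis
  obtain ⟨p, q, hpq, hi⟩ : ∃ p q : ℂ, (p ≠ 0 ∨ q ≠ 0) ∧ p * b k i + q * b l i = 0 := by
    by_cases h : b k i = 0
    · exact ⟨1, 0, by simp, by simp [h]⟩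
    · exact ⟨b l i, -b k i, by simp [h], by ring⟩
  have hinner (j : n) :
      inner ℂ (b j) (p • b k + q • b l) = (if j = k then p else 0) + (if j = l then q else 0) := by
    rw [inner_add_right, inner_smul_right, inner_smul_right]
    simp [orthonormal_iff_ite.1 b.orthonormal]
  refine hasMinorEigenvalueNear_of_approx hM (x := p • b k + q • b l) (fun h0 => ?_)
    (by simpa using hi) (norm_map_sub_smul_le (toEuclideanLin_eigenvectorBasis hM)
      ((abs_nonneg _).trans hk) fun j hj => ?_)
  · have hp := hinner k
    have hq := hinner l
    simp only [h0, inner_zero_right, if_true, if_neg hkl, if_neg hkl.symm, add_zero,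
      zero_add] at hp hq
    exact hpq.elim (· hp.symm) (· hq.symm)
  · refine (hinner j).trans ?_
    rw [if_neg (by rintro rfl; exact hj.not_ge hk), if_neg (by rintro rfl; exact hj.not_ge hl),
      add_zero]

end Minor

section RankTwo

variable {n : Type*} [DecidableEq n]

/-- The Hermitian rank-two matrix `ζ u eᵢ* + ζ̄ eᵢ u*`. For `u i = 0` it only has entries in the
row and in the column of the site `i`. -/
def rankTwo (i : n) (u : n → ℂ) (ζ : ℂ) : Matrix n n ℂ :=
  ζ • vecMulVec u (Pi.single i 1) + star ζ • vecMulVec (Pi.single i 1) (star u)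

lemma rankTwo_apply (i : n) (u : n → ℂ) (ζ : ℂ) (j k : n) :
    rankTwo i u ζ j k = (if k = i then ζ * u j else 0) + if j = i then star (ζ * u k) else 0 := by
  simp [rankTwo, vecMulVec_apply, Pi.single_apply, mul_comm]

lemma isHermitian_rankTwo (i : n) (u : n → ℂ) (ζ : ℂ) : (rankTwo i u ζ).IsHermitian := by
  rw [IsHermitian, rankTwo, conjTranspose_add, conjTranspose_smul, conjTranspose_smul,
    conjTranspose_vecMulVec, conjTranspose_vecMulVec, star_star, star_star, add_comm,
    ← Pi.single_star, star_one]

lemma rankTwo_add (i : n) (u : n → ℂ) (ζ ξ : ℂ) :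
    rankTwo i u (ζ + ξ) = rankTwo i u ζ + rankTwo i u ξ := by
  simp only [rankTwo, star_add, add_smul]
  abel

lemma rankTwo_neg (i : n) (u : n → ℂ) (ζ : ℂ) : rankTwo i (-u) ζ = -rankTwo i u ζ := by
  simp [rankTwo, add_comm]

variable [Fintype n]

lemma rankTwo_mulVec (i : n) (u : n → ℂ) (ζ : ℂ) (x : n → ℂ) :
    rankTwo i u ζ *ᵥ x = (ζ * x i) • u + (star ζ * (star u ⬝ᵥ x)) • Pi.single i 1 := by
  rw [rankTwo, add_mulVec, smul_mulVec, smul_mulVec, vecMulVec_mulVec, vecMulVec_mulVec,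
    single_one_dotProduct, op_smul_eq_smul, op_smul_eq_smul, smul_smul, smul_smul]

variable {M : Matrix n n ℂ} {i : n} {β : ℝ} {u : n → ℂ} {z : ℂ}

namespace IsMinorEigenpair

lemma mulVec_eq (h : IsMinorEigenpair M i β u) :
    M *ᵥ u = (β : ℂ) • u + (M *ᵥ u) i • Pi.single i 1 := by
  funext j
  by_cases hj : j = i
  · subst hj; simp [h.apply_self]
  · simp [h.mulVec_apply j hj, hj]

lemma rankTwo_mulVec_self (h : IsMinorEigenpair M i β u) (ζ : ℂ) :
    rankTwo i u ζ *ᵥ u = star ζ • Pi.single i 1 := by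
  rw [rankTwo_mulVec, h.apply_self, h.star_dotProduct_self, mul_zero, zero_smul, zero_add, mul_one]

lemma add_rankTwo (h : IsMinorEigenpair M i β u) (ζ : ℂ) :
    IsMinorEigenpair (M + rankTwo i u ζ) i β u where
  sum_norm_sq := h.sum_norm_sq
  apply_self := h.apply_self
  mulVec_apply j hj := by
    rw [add_mulVec, h.rankTwo_mulVec_self, Pi.add_apply, h.mulVec_apply j hj]
    simp [hj]

lemma sub_mul_star_dotProduct_resolvent_col (h : IsMinorEigenpair M i β u) (hM : M.IsHermitian)
    (hz : z ∈ resolventSet ℂ M) :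
    (z - β) * (star u ⬝ᵥ (resolvent M z).col i) = star ((M *ᵥ u) i) * resolvent M z i i := by
  have hcol := congrArg (star u ⬝ᵥ ·) (smul_sub_mulVec_resolvent_col hz i)
  have hadj : star u ᵥ* M = (β : ℂ) • star u + star ((M *ᵥ u) i) • Pi.single i 1 := by
    have := congrArg star h.mulVec_eq
    rwa [star_mulVec, hM.eq, star_add, star_smul, star_smul, ← Pi.single_star, star_one,
      RCLike.star_def, Complex.conj_ofReal] at this
  simp only [dotProduct_sub, dotProduct_smul, dotProduct_mulVec, hadj, add_dotProduct,
    smul_dotProduct, single_one_dotProduct, dotProduct_single_one, Pi.star_apply, h.apply_self,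
    star_zero, smul_eq_mul, col_apply] at hcol
  linear_combination hcol

lemma resolvent_add_rankTwo_diag_mul (h : IsMinorEigenpair M i β u) (hMu : (M *ᵥ u) i = 0)
    (hM : M.IsHermitian) (hz : 0 < z.im) (ζ : ℂ) :
    resolvent (M + rankTwo i u ζ) z i i *
      ((z - β) / resolvent M z i i - (Complex.normSq ζ : ℂ)) = z - β := by
  have hMζ := hM.add (isHermitian_rankTwo i u ζ)
  have hres := mem_resolventSet_of_im_pos hM hz
  have hresζ := mem_resolventSet_of_im_pos hMζ hz
  have hzβ : z - β ≠ 0 := fun h => by simpa [hz.ne'] using congrArg Complex.im h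
  have hdiag : resolvent M z i i ≠ 0 := fun h => by
    simpa [h] using neg_im_resolvent_diag_pos hM hz i
  have hu : resolvent M z *ᵥ u = (z - β)⁻¹ • u := by
    rw [resolvent_mulVec_eq_iff hres, mulVec_smul, h.mulVec_eq, hMu, zero_smul, add_zero,
      smul_comm z, ← smul_sub, ← sub_smul, inv_smul_smul₀ hzβ]
  let x := (resolvent (M + rankTwo i u ζ) z).col i
  have hx : resolvent M z *ᵥ (Pi.single i 1 + rankTwo i u ζ *ᵥ x) = x := by
    rw [resolvent_mulVec_eq_iff hres, ← smul_sub_mulVec_resolvent_col hresζ i, add_mulVec]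
    abel
  have hux : (z - β) * (star u ⬝ᵥ x) = ζ * x i := by
    refine ((h.add_rankTwo ζ).sub_mul_star_dotProduct_resolvent_col hMζ hresζ).trans ?_
    simp [add_mulVec, hMu, h.rankTwo_mulVec_self, x]
  have hxi : resolvent M z i i + star ζ * (star u ⬝ᵥ x) * resolvent M z i i = x i := by
    simpa [rankTwo_mulVec, mulVec_add, mulVec_smul, hu, h.apply_self] using congrFun hx i
  change x i * _ = _
  rw [Complex.normSq_eq_conj_mul_self]
  field_simp
  rw [RCLike.star_def] at hxi
  linear_combination (β - z) * hxi + (starRingEnd ℂ) ζ * resolvent M z i i * hux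

lemma exists_resolvent_add_rankTwo_diag_mul (h : IsMinorEigenpair M i β u) (hM : M.IsHermitian)
    (hz : 0 < z.im) : ∃ ζ₀ κ : ℂ, ∀ ζ : ℂ,
      resolvent (M + rankTwo i u ζ) z i i * (κ - (Complex.normSq (ζ - ζ₀) : ℂ)) = z - β := by
  let ζ₀ := -star ((M *ᵥ u) i)
  have hζ₀ : ((M + rankTwo i u ζ₀) *ᵥ u) i = 0 := by
    simp [add_mulVec, h.rankTwo_mulVec_self, ζ₀]
  refine ⟨ζ₀, (z - β) / resolvent (M + rankTwo i u ζ₀) z i i, fun ζ => ?_⟩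
  have hζ : M + rankTwo i u ζ = M + rankTwo i u ζ₀ + rankTwo i u (ζ - ζ₀) := by
    rw [add_assoc, ← rankTwo_add, add_sub_cancel]
  rw [hζ]
  exact (h.add_rankTwo ζ₀).resolvent_add_rankTwo_diag_mul hζ₀
    (hM.add (isHermitian_rankTwo i u ζ₀)) hz (ζ - ζ₀)

end IsMinorEigenpair

end RankTwo

section Lorentzian

lemma lintegral_lorentzian {y : ℝ} (hy : 0 < y) (x : ℝ) :
    ∫⁻ r : ℝ, ENNReal.ofReal (y / ((r - x) ^ 2 + y ^ 2)) = ENNReal.ofReal Real.pi := by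
  have hpdf (r : ℝ) : ENNReal.ofReal (y / ((r - x) ^ 2 + y ^ 2)) =
      ENNReal.ofReal Real.pi * cauchyPDF x y.toNNReal r := by
    rw [cauchyPDF_def, ← ENNReal.ofReal_mul Real.pi_pos.le, cauchyPDFReal_def,
      Real.coe_toNNReal y hy.le]
    field_simp
  simp_rw [hpdf]
  rw [lintegral_const_mul _ (by fun_prop),
    lintegral_cauchyPDF_eq_one x (Real.toNNReal_pos.2 hy).ne', mul_one]

lemma lintegral_abs_lorentzian_le (x y : ℝ) :
    ∫⁻ r : ℝ, ENNReal.ofReal (|y| / ((r - x) ^ 2 + |y| ^ 2)) ≤ ENNReal.ofReal Real.pi := by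
  rcases (abs_nonneg y).eq_or_lt with h | h
  · simp [← h]
  · exact (lintegral_lorentzian h x).le

lemma setLIntegral_lorentzian_le_of_two_mul_lt {E s ε l : ℝ} (hs : 0 < s) (hε : 0 < ε)
    (hl : 2 * s < |l - E|) :
    ∫⁻ t in Set.Icc (E - s) (E + s), ENNReal.ofReal (ε / ((t - l) ^ 2 + ε ^ 2)) ≤
      ENNReal.ofReal (2 * ε / s) := by
  have hbound (t : ℝ) (ht : t ∈ Set.Icc (E - s) (E + s)) :
      ENNReal.ofReal (ε / ((t - l) ^ 2 + ε ^ 2)) ≤ ENNReal.ofReal (ε / s ^ 2) := by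
    have htE : |t - E| ≤ s := abs_le.2 ⟨by linarith [ht.1], by linarith [ht.2]⟩
    have hlt : s ≤ |t - l| := by linarith [abs_sub_le l t E, abs_sub_comm t l]
    have hsq : s ^ 2 ≤ (t - l) ^ 2 := by rw [← sq_abs (t - l)]; gcongr
    gcongr
    linarith [sq_nonneg ε]
  refine (setLIntegral_mono measurable_const hbound).trans_eq ?_
  rw [setLIntegral_const, Real.volume_Icc, ← ENNReal.ofReal_mul (by positivity)]
  congr 1
  field_simp
  ring

lemma setLIntegral_lorentzian_le {E s ε l : ℝ} (hs : 0 < s) (hε : 0 < ε) :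
    ∫⁻ t in Set.Icc (E - s) (E + s), ENNReal.ofReal (ε / ((t - l) ^ 2 + ε ^ 2)) ≤
      (if |l - E| ≤ 2 * s then ENNReal.ofReal Real.pi else 0) + ENNReal.ofReal (2 * ε / s) := by
  split_ifs with h
  · exact (setLIntegral_le_lintegral _ _).trans
      ((lintegral_lorentzian hε l).le.trans le_self_add)
  · rw [zero_add]
    exact setLIntegral_lorentzian_le_of_two_mul_lt hs hε (not_le.1 h)

end Lorentzian

section RankTwoAverage

lemma mul_inv_le_sqrt_mul_rpow {ε t w : ℝ} (hε : 0 < ε) (ht : 0 < t) (htw : t ≤ w)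
    (hw : ε ^ 2 ≤ w) : ε * w⁻¹ ≤ √ε * t ^ (-(3 / 4 : ℝ)) := by
  have hw₀ : 0 < w := ht.trans_le htw
  have hquarter : ε * w ^ (-(1 / 4 : ℝ)) ≤ √ε :=
    calc ε * w ^ (-(1 / 4 : ℝ)) ≤ ε * (ε ^ 2) ^ (-(1 / 4 : ℝ)) :=
          mul_le_mul_of_nonneg_left
            (Real.rpow_le_rpow_of_nonpos (by positivity) hw (by norm_num)) hε.le
      _ = ε ^ (1 : ℝ) * ε ^ (-(1 / 2 : ℝ)) := by
          rw [← Real.rpow_natCast ε 2, ← Real.rpow_mul hε.le, Real.rpow_one]; norm_num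
      _ = √ε := by rw [← Real.rpow_add hε, Real.sqrt_eq_rpow]; norm_num
  calc ε * w⁻¹ = ε * w ^ (-(1 / 4 : ℝ)) * w ^ (-(3 / 4 : ℝ)) := by
        rw [mul_assoc, ← Real.rpow_add hw₀, ← Real.rpow_neg_one]; norm_num
    _ ≤ √ε * t ^ (-(3 / 4 : ℝ)) :=
        mul_le_mul hquarter (Real.rpow_le_rpow_of_nonpos ht htw (by norm_num)) (by positivity)
          (by positivity)

lemma sq_le_norm_of_mul_eq_add_mul_I {g w : ℂ} {d ε : ℝ} (hε : 0 < ε) (hg : ‖g‖ ≤ 1 / ε)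
    (h : g * w = d + ε * Complex.I) : ε ^ 2 ≤ ‖w‖ := by
  have him : ε ≤ ‖g‖ * ‖w‖ := by
    rw [← norm_mul, h]
    refine le_trans ?_ (Complex.abs_im_le_norm _)
    simpa using le_abs_self ε
  have : ε ≤ 1 / ε * ‖w‖ := him.trans (by gcongr)
  rw [div_mul_eq_mul_div, one_mul, le_div_iff₀ hε] at this
  rwa [pow_two]

lemma neg_im_le_of_mul_eq_add_mul_I {g w : ℂ} {d ε : ℝ} (hε : 0 < ε) (hg : ‖g‖ ≤ 1 / ε)
    (h : g * w = d + ε * Complex.I) :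
    -g.im ≤ √ε * |w.re| ^ (-(3 / 4 : ℝ)) + |d| * (|w.im| / (w.re ^ 2 + |w.im| ^ 2)) := by
  have hw := sq_le_norm_of_mul_eq_add_mul_I hε hg h
  have hw₀ : 0 < ‖w‖ := (by positivity : 0 < ε ^ 2).trans_le hw
  have hnorm : ‖w‖ ^ 2 = w.re ^ 2 + |w.im| ^ 2 := by
    rw [← Complex.normSq_eq_norm_sq, Complex.normSq_apply, sq_abs]; ring
  have him : -g.im = -(ε * w.re) / ‖w‖ ^ 2 + d * w.im / ‖w‖ ^ 2 := by
    rw [eq_div_of_mul_eq (norm_pos_iff.1 hw₀) h, Complex.div_im, Complex.normSq_eq_norm_sq]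
    simp
    ring
  have hre : -(ε * w.re) / ‖w‖ ^ 2 ≤ √ε * |w.re| ^ (-(3 / 4 : ℝ)) := by
    rcases eq_or_ne w.re 0 with h0 | h0
    · simp [h0]
    calc -(ε * w.re) / ‖w‖ ^ 2 ≤ ε * ‖w‖ / ‖w‖ ^ 2 := by
          rw [← mul_neg]
          gcongr
          exact (neg_le_abs _).trans (Complex.abs_re_le_norm w)
      _ = ε * ‖w‖⁻¹ := by field_simp
      _ ≤ _ := mul_inv_le_sqrt_mul_rpow hε (abs_pos.2 h0) (Complex.abs_re_le_norm w) hw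
  rw [him, ← hnorm, ← mul_div_assoc, ← abs_mul]
  gcongr
  exact le_abs_self _

-- Polar coordinates: `|ζ|²` has Lebesgue density `π` on the half-line.
lemma lintegral_comp_normSq_le {h : ℝ → ℝ≥0∞} (hh : Measurable h) :
    ∫⁻ ζ : ℂ, h (Complex.normSq ζ) ≤ ENNReal.ofReal Real.pi * ∫⁻ r, h r := by
  have hnormSq (p : ℝ × ℝ) : Complex.normSq (Complex.polarCoord.symm p) = p.1 ^ 2 := by
    rw [Complex.normSq_eq_norm_sq, Complex.norm_polarCoord_symm, sq_abs]
  have hsq : 2 * ∫⁻ r in Set.Ioi (0 : ℝ), ENNReal.ofReal r * h (r ^ 2) ≤ ∫⁻ r, h r := by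
    have hchange := lintegral_image_eq_lintegral_abs_deriv_mul (s := Set.Ioi (0 : ℝ))
      (f := fun r => r ^ 2) (f' := fun r => 2 * r) measurableSet_Ioi
      (fun x _ => by simpa using (hasDerivAt_pow 2 x).hasDerivWithinAt)
      (fun x hx y hy hxy => (pow_left_inj₀ (le_of_lt hx) (le_of_lt hy) two_ne_zero).1 hxy) h
    rw [← lintegral_const_mul _ (by fun_prop)]
    refine le_of_eq_of_le ?_ (hchange.ge.trans (setLIntegral_le_lintegral _ _))
    refine setLIntegral_congr_fun measurableSet_Ioi fun r hr => ?_
    rw [abs_of_pos (mul_pos two_pos hr), ENNReal.ofReal_mul two_pos.le, mul_assoc,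
      ENNReal.ofReal_ofNat]
  rw [← Complex.lintegral_comp_polarCoord_symm]
  simp_rw [hnormSq, smul_eq_mul]
  rw [polarCoord_target, Measure.volume_eq_prod, ← Measure.prod_restrict]
  have hprod := lintegral_prod_mul (μ := volume.restrict (Set.Ioi (0 : ℝ)))
    (ν := volume.restrict (Set.Ioo (-Real.pi) Real.pi))
    (f := fun r => ENNReal.ofReal r * h (r ^ 2)) (g := fun _ => 1) (by fun_prop) (by fun_prop)
  simp only [mul_one] at hprod
  rw [hprod, setLIntegral_one, Real.volume_Ioo, sub_neg_eq_add, ← two_mul,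
    mul_comm 2 Real.pi, ENNReal.ofReal_mul Real.pi_pos.le, ENNReal.ofReal_ofNat, mul_comm,
    mul_assoc]
  gcongr

lemma lintegral_comp_normSq_sub_le (ζ₀ : ℂ) {h : ℝ → ℝ≥0∞} (hh : Measurable h) :
    ∫⁻ ζ : ℂ, h (Complex.normSq (ζ - ζ₀)) ≤ ENNReal.ofReal Real.pi * ∫⁻ r, h r := by
  rw [lintegral_sub_right_eq_self (fun ζ : ℂ => h (Complex.normSq ζ)) ζ₀]
  exact lintegral_comp_normSq_le hh

/-- The weight `|t|^(-3/4)`, cut off outside the unit ball to make it integrable. -/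
def singularWeight : ℝ → ℝ≥0∞ :=
  (Metric.ball 0 1).indicator fun t => ENNReal.ofReal (|t| ^ (-(3 / 4 : ℝ)))

@[fun_prop]
lemma measurable_singularWeight : Measurable singularWeight :=
  Measurable.indicator (by fun_prop) measurableSet_ball

lemma ofReal_rpow_le_singularWeight_add_one (t : ℝ) :
    ENNReal.ofReal (|t| ^ (-(3 / 4 : ℝ))) ≤ singularWeight t + 1 := by
  by_cases ht : t ∈ Metric.ball (0 : ℝ) 1
  · rw [singularWeight, Set.indicator_of_mem ht]; exact le_self_add
  · rw [singularWeight, Set.indicator_of_notMem ht, zero_add, ENNReal.ofReal_le_one]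
    rw [mem_ball_zero_iff, not_lt] at ht
    exact Real.rpow_le_one_of_one_le_of_nonpos ht (by norm_num)

lemma lintegral_singularWeight_ne_top : ∫⁻ t, singularWeight t ≠ ⊤ := by
  have hint : IntegrableOn (fun t : ℝ => |t| ^ (-(3 / 4 : ℝ))) (Metric.ball 0 1) := by
    refine integrableOn_ball_of_norm_le_rpow (C := 1) (α := 3 / 4) (by simp) (by norm_num)
      (ae_of_all _ fun t => ?_) (measurable_id.abs.pow_const _).aestronglyMeasurable
    rw [one_mul, Real.norm_of_nonneg (by positivity), Real.norm_eq_abs]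
  rw [singularWeight, lintegral_indicator measurableSet_ball]
  exact hint.lintegral_lt_top.ne

variable {n : Type*} [Fintype n] [DecidableEq n] {M : Matrix n n ℂ} {i : n} {β : ℝ} {u : n → ℂ}

lemma IsMinorEigenpair.exists_ofReal_neg_im_resolvent_add_rankTwo_le
    (h : IsMinorEigenpair M i β u) (hM : M.IsHermitian) (E : ℝ) {ε : ℝ} (hε : 0 < ε) :
    ∃ (ζ₀ : ℂ) (x y : ℝ), ∀ ζ : ℂ,
      ENNReal.ofReal (-(resolvent (M + rankTwo i u ζ) (E + ε * Complex.I) i i).im) ≤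
        ENNReal.ofReal √ε * (singularWeight (Complex.normSq (ζ - ζ₀) - x) + 1) +
        ENNReal.ofReal |β - E| *
          ENNReal.ofReal (|y| / ((Complex.normSq (ζ - ζ₀) - x) ^ 2 + |y| ^ 2)) := by
  have him : ((E : ℂ) + ε * Complex.I).im = ε := by simp
  have hz : 0 < ((E : ℂ) + ε * Complex.I).im := hε.trans_eq him.symm
  obtain ⟨ζ₀, κ, hκ⟩ := h.exists_resolvent_add_rankTwo_diag_mul hM hz
  refine ⟨ζ₀, κ.re, κ.im, fun ζ => ?_⟩
  have hnorm := norm_resolvent_diag_le (hM.add (isHermitian_rankTwo i u ζ)) hz i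
  rw [him] at hnorm
  have hle := neg_im_le_of_mul_eq_add_mul_I (d := E - β) hε hnorm
    ((hκ ζ).trans (by push_cast; ring))
  simp only [Complex.sub_re, Complex.sub_im, Complex.ofReal_re, Complex.ofReal_im, sub_zero,
    abs_sub_comm κ.re, sub_sq_comm κ.re, abs_sub_comm E] at hle
  refine (ENNReal.ofReal_le_ofReal hle).trans ?_
  rw [ENNReal.ofReal_add (by positivity) (by positivity), ENNReal.ofReal_mul (by positivity),
    ENNReal.ofReal_mul (abs_nonneg _)]
  gcongr
  exact ofReal_rpow_le_singularWeight_add_one _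

theorem IsMinorEigenpair.setLIntegral_neg_im_resolvent_add_rankTwo_le
    (h : IsMinorEigenpair M i β u) (hM : M.IsHermitian) (E : ℝ) {ε : ℝ} (hε : 0 < ε) (s : Set ℂ) :
    ∫⁻ ζ in s, ENNReal.ofReal (-(resolvent (M + rankTwo i u ζ) (E + ε * Complex.I) i i).im) ≤
      ENNReal.ofReal √ε * (ENNReal.ofReal Real.pi * (∫⁻ t, singularWeight t) + volume s) +
      ENNReal.ofReal (Real.pi ^ 2 * |β - E|) := by
  obtain ⟨ζ₀, x, y, hle⟩ := h.exists_ofReal_neg_im_resolvent_add_rankTwo_le hM E hε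
  have hnormSq : Measurable fun ζ : ℂ => Complex.normSq (ζ - ζ₀) :=
    Complex.continuous_normSq.measurable.comp (measurable_id.sub_const _)
  have hweight : ∫⁻ ζ in s, singularWeight (Complex.normSq (ζ - ζ₀) - x) ≤
      ENNReal.ofReal Real.pi * ∫⁻ t, singularWeight t := by
    rw [← lintegral_sub_right_eq_self singularWeight x]
    exact (setLIntegral_le_lintegral _ _).trans
      (lintegral_comp_normSq_sub_le ζ₀ (h := fun t => singularWeight (t - x)) (by fun_prop))
  have hlorentz : ∫⁻ ζ in s, ENNReal.ofReal
      (|y| / ((Complex.normSq (ζ - ζ₀) - x) ^ 2 + |y| ^ 2)) ≤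
      ENNReal.ofReal Real.pi * ENNReal.ofReal Real.pi :=
    (setLIntegral_le_lintegral _ _).trans
      ((lintegral_comp_normSq_sub_le ζ₀ (h := fun t => ENNReal.ofReal
        (|y| / ((t - x) ^ 2 + |y| ^ 2))) (by fun_prop)).trans
        (by gcongr; exact lintegral_abs_lorentzian_le x y))
  refine (lintegral_mono hle).trans ?_
  rw [lintegral_add_left (by fun_prop), lintegral_const_mul _ (by fun_prop),
    lintegral_const_mul _ (by fun_prop), lintegral_add_left (by fun_prop), setLIntegral_one,
    mul_comm (Real.pi ^ 2), ENNReal.ofReal_mul (abs_nonneg _), pow_two Real.pi,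
    ENNReal.ofReal_mul Real.pi_pos.le]
  exact add_le_add (mul_le_mul_right (add_le_add hweight le_rfl) _) (mul_le_mul_right hlorentz _)

end RankTwoAverage

section EnergyAverage

variable {n : Type*} [Fintype n] {M : Matrix n n ℂ} {i : n} {m r : ℝ}

lemma isClosed_setOf_isMinorEigenpair (i : n) :
    IsClosed {p : Matrix n n ℂ × ℝ × (n → ℂ) | IsMinorEigenpair p.1 i p.2.1 p.2.2} := by
  have hset : {p : Matrix n n ℂ × ℝ × (n → ℂ) | IsMinorEigenpair p.1 i p.2.1 p.2.2} =
      {p | ∑ j, ‖p.2.2 j‖ ^ 2 = 1} ∩ {p | p.2.2 i = 0} ∩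
        ⋂ (j) (_ : j ≠ i), {p | (p.1 *ᵥ p.2.2) j = (p.2.1 : ℂ) * p.2.2 j} := by
    ext p
    simp only [Set.mem_inter_iff, Set.mem_iInter]
    exact ⟨fun h => ⟨⟨h.1, h.2⟩, h.3⟩, fun h => ⟨h.1.1, h.1.2, h.2⟩⟩
  rw [hset]
  exact ((isClosed_eq (by fun_prop) continuous_const).inter
    (isClosed_eq (by fun_prop) continuous_const)).inter
      (isClosed_iInter fun j => isClosed_iInter fun _ => isClosed_eq (by fun_prop) (by fun_prop))

lemma IsMinorEigenpair.norm_le_one {β : ℝ} {u : n → ℂ} (h : IsMinorEigenpair M i β u) :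
    ‖u‖ ≤ 1 := by
  refine (pi_norm_le_iff_of_nonneg zero_le_one).2 fun j => ?_
  rw [← sq_le_one_iff₀ (norm_nonneg _), ← h.sum_norm_sq]
  exact Finset.single_le_sum (f := fun j => ‖u j‖ ^ 2) (fun _ _ => by positivity)
    (Finset.mem_univ j)

lemma isClosed_setOf_hasMinorEigenvalueNear (i : n) (m r : ℝ) :
    IsClosed {M : Matrix n n ℂ | HasMinorEigenvalueNear M i m r} := by
  have hK : IsCompact (Metric.closedBall m r ×ˢ Metric.closedBall (0 : n → ℂ) 1) :=
    (isCompact_closedBall _ _).prod (isCompact_closedBall _ _)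
  rw [← isOpen_compl_iff, isOpen_iff_eventually]
  intro M hM
  have hev := hK.eventually_forall_of_forall_eventually (x₀ := M)
    (P := fun M p => ¬ IsMinorEigenpair M i p.1 p.2) fun p hp =>
      (isClosed_setOf_isMinorEigenpair i).isOpen_compl.mem_nhds fun h => hM ⟨p.1, p.2, hp.1, h⟩
  filter_upwards [hev] with M' hM' ⟨β, u, hβ, hu⟩
  exact hM' (β, u) ⟨hβ, mem_closedBall_zero_iff.2 hu.norm_le_one⟩ hu

lemma IsMinorEigenpair.congr {M' : Matrix n n ℂ} {β : ℝ} {u : n → ℂ} (h : IsMinorEigenpair M i β u)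
    (hMM' : ∀ j k, j ≠ i → k ≠ i → M j k = M' j k) : IsMinorEigenpair M' i β u := by
  refine ⟨h.sum_norm_sq, h.apply_self, fun j hj => ?_⟩
  rw [← h.mulVec_apply j hj]
  refine Finset.sum_congr rfl fun k _ => ?_
  obtain rfl | hk := eq_or_ne k i
  · simp only [h.apply_self, mul_zero]
  · simp only [hMM' j k hj hk]

lemma HasMinorEigenvalueNear.congr {M' : Matrix n n ℂ} (h : HasMinorEigenvalueNear M i m r)
    (hMM' : ∀ j k, j ≠ i → k ≠ i → M j k = M' j k) : HasMinorEigenvalueNear M' i m r :=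
  let ⟨β, u, hβ, hu⟩ := h
  ⟨β, u, hβ, hu.congr hMM'⟩

variable [DecidableEq n]

lemma setLIntegral_sum_neg_im_resolvent_diag (hM : M.IsHermitian) {ε : ℝ} (hε : 0 < ε)
    (s : Set ℝ) :
    ∫⁻ t in s, ∑ i, ENNReal.ofReal (-(resolvent M ((t : ℝ) + ε * Complex.I) i i).im) =
      ∑ k, ∫⁻ t in s, ENNReal.ofReal (ε / ((t - hM.eigenvalues k) ^ 2 + ε ^ 2)) := by
  rw [← lintegral_finsetSum _ fun k _ => by fun_prop]
  refine lintegral_congr fun t => ?_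
  have hz : 0 < ((t : ℂ) + ε * Complex.I).im := by simpa using hε
  rw [← ENNReal.ofReal_sum_of_nonneg fun i _ => (neg_im_resolvent_diag_pos hM hz i).le,
    sum_neg_im_resolvent_diag hM hz, ENNReal.ofReal_sum_of_nonneg fun k _ => by
      rw [Complex.add_im]; positivity]
  simp

theorem setLIntegral_sum_neg_im_resolvent_diag_le_or (hM : M.IsHermitian) (E : ℝ) {s ε : ℝ}
    (hs : 0 < s) (hε : 0 < ε) :
    ∫⁻ t in Set.Icc (E - s) (E + s), ∑ i, ENNReal.ofReal
        (-(resolvent M ((t : ℝ) + ε * Complex.I) i i).im) ≤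
      ENNReal.ofReal Real.pi + Fintype.card n * ENNReal.ofReal (2 * ε / s) ∨
    ∀ i, HasMinorEigenvalueNear M i E (2 * s) := by
  by_cases h : ∃ k l, k ≠ l ∧ |hM.eigenvalues k - E| ≤ 2 * s ∧ |hM.eigenvalues l - E| ≤ 2 * s
  · obtain ⟨k, l, hkl, hk, hl⟩ := h
    exact Or.inr fun i => hasMinorEigenvalueNear_of_two_eigenvalues hM i hkl hk hl
  left
  have hcard : (Finset.univ.filter fun k => |hM.eigenvalues k - E| ≤ 2 * s).card ≤ 1 := by
    refine Finset.card_le_one.2 fun a ha b hb => by_contra fun hab => h ⟨a, b, hab, ?_, ?_⟩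
    · exact (Finset.mem_filter.1 ha).2
    · exact (Finset.mem_filter.1 hb).2
  rw [setLIntegral_sum_neg_im_resolvent_diag hM hε]
  refine (Finset.sum_le_sum fun k _ => setLIntegral_lorentzian_le hs hε).trans ?_
  rw [Finset.sum_add_distrib, Finset.sum_const, Finset.card_univ, nsmul_eq_mul,
    ← Finset.sum_filter, Finset.sum_const]
  gcongr
  simpa using nsmul_le_nsmul_left (bot_le (a := ENNReal.ofReal Real.pi)) hcard

lemma measurable_resolvent_apply {α : Type*} [MeasurableSpace α] {F : α → Matrix n n ℂ} {z : α → ℂ}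
    (hF : ∀ j k, Measurable fun a => F a j k) (hz : Measurable z) (i j : n) :
    Measurable fun a => resolvent (F a) (z a) i j := by
  have hinv : Measurable fun A : n → n → ℂ => (of A)⁻¹ i j := by
    have hdet : Continuous fun A : n → n → ℂ => (of A).det := continuous_id.matrix_det
    have hadj : Continuous fun A : n → n → ℂ => (of A).adjugate i j :=
      continuous_id.matrix_adjugate.matrix_elem i j
    simp only [inv_def, Ring.inverse_eq_inv', Matrix.smul_apply]
    exact hdet.measurable.inv.mul hadj.measurable
  simp only [resolvent_eq_nonsing_inv]
  refine hinv.comp (measurable_pi_iff.2 fun j => measurable_pi_iff.2 fun k => ?_)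
  exact (hz.mul_const _).sub (hF j k)

end EnergyAverage

section MMatrix

variable {n : Type*} [Fintype n]

/-- `A` is a nonsingular M-matrix, in the form of a diagonal dominance condition: its off-diagonal
entries are nonpositive and its row sums are positive. Such an `A` satisfies a minimum principle. -/
structure IsMMatrix (A : Matrix n n ℝ) : Prop where
  apply_nonpos : ∀ x y, x ≠ y → A x y ≤ 0
  sum_row_pos : ∀ x, 0 < ∑ y, A x y

namespace IsMMatrix

variable {A : Matrix n n ℝ}

lemma nonneg_of_mulVec_nonneg (hA : IsMMatrix A) {f : n → ℝ} (hf : 0 ≤ A *ᵥ f) : 0 ≤ f := by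
  intro z
  have : Nonempty n := ⟨z⟩
  obtain ⟨x, hx⟩ := Finite.exists_min f
  refine le_trans (nonneg_of_mul_nonneg_right ?_ (hA.sum_row_pos x)) (hx z)
  calc 0 ≤ ∑ y, A x y * f y := hf x
    _ ≤ ∑ y, A x y * f x := Finset.sum_le_sum fun y _ => by
      obtain rfl | hxy := eq_or_ne x y
      · rfl
      · exact mul_le_mul_of_nonpos_left (hx y) (hA.apply_nonpos x y hxy)
    _ = (∑ y, A x y) * f x := (Finset.sum_mul ..).symm

variable [DecidableEq n]

lemma isUnit_det (hA : IsMMatrix A) : IsUnit A.det := by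
  rw [isUnit_iff_ne_zero, Ne, ← exists_mulVec_eq_zero_iff]
  rintro ⟨f, hf, hAf⟩
  refine hf (le_antisymm ?_ (hA.nonneg_of_mulVec_nonneg hAf.ge))
  exact neg_nonneg.1 (hA.nonneg_of_mulVec_nonneg (by rw [mulVec_neg, hAf, neg_zero]))

lemma inv_nonneg (hA : IsMMatrix A) (x y : n) : 0 ≤ A⁻¹ x y := by
  refine hA.nonneg_of_mulVec_nonneg (f := A⁻¹.col y) ?_ x
  rw [← mulVec_single_one, mulVec_mulVec, mul_nonsing_inv A hA.isUnit_det, one_mulVec]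
  exact Pi.single_nonneg.2 zero_le_one

lemma add_one (hA : IsMMatrix A) : IsMMatrix (A + 1) where
  apply_nonpos x y hxy := by simpa [one_apply_ne hxy] using hA.apply_nonpos x y hxy
  sum_row_pos x := by
    simp only [Matrix.add_apply, Finset.sum_add_distrib, one_apply, Finset.sum_ite_eq,
      Finset.mem_univ, if_true]
    linarith [hA.sum_row_pos x]

lemma inv_eq_add_inv_mul_inv (hA : IsMMatrix A) : A⁻¹ = (A + 1)⁻¹ + (A + 1)⁻¹ * A⁻¹ := by
  have hmul : (A + 1) * A⁻¹ = 1 + A⁻¹ := by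
    rw [add_mul, mul_nonsing_inv A hA.isUnit_det, one_mul]
  calc A⁻¹ = (A + 1)⁻¹ * ((A + 1) * A⁻¹) :=
        (nonsing_inv_mul_cancel_left _ _ hA.add_one.isUnit_det).symm
    _ = (A + 1)⁻¹ + (A + 1)⁻¹ * A⁻¹ := by rw [hmul, mul_add, mul_one]

lemma inv_add_one_pow_le_inv (hA : IsMMatrix A) (k : ℕ) (x y : n) :
    ((A + 1)⁻¹ ^ (k + 1)) x y ≤ A⁻¹ x y := by
  have hmul (B C : Matrix n n ℝ) (hB : ∀ x y, 0 ≤ B x y) (hC : ∀ x y, 0 ≤ C x y) (x y : n) :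
      0 ≤ (B * C) x y := Finset.sum_nonneg fun z _ => mul_nonneg (hB x z) (hC z y)
  induction k generalizing x y with
  | zero =>
    rw [hA.inv_eq_add_inv_mul_inv, zero_add, pow_one]
    exact le_add_of_nonneg_right (hmul _ _ hA.add_one.inv_nonneg hA.inv_nonneg x y)
  | succ k ih =>
    have hsub := hmul _ (A⁻¹ - (A + 1)⁻¹ ^ (k + 1)) hA.add_one.inv_nonneg
      (fun x y => sub_nonneg.2 (ih x y)) x y
    rw [mul_sub, ← pow_succ', Matrix.sub_apply] at hsub
    rw [hA.inv_eq_add_inv_mul_inv, Matrix.add_apply]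
    linarith [hA.add_one.inv_nonneg x y]

end IsMMatrix

lemma inv_pow_mulVec_of_mulVec_eq_smul {K : Type*} [Field K] [DecidableEq n] {A : Matrix n n K}
    (hA : IsUnit A.det) {v : n → K} {l : K} (hl : l ≠ 0) (h : A *ᵥ v = l • v) (k : ℕ) :
    A⁻¹ ^ k *ᵥ v = (l ^ k)⁻¹ • v := by
  have hinv : A⁻¹ *ᵥ v = l⁻¹ • v := by
    rw [eq_inv_smul_iff₀ hl, ← mulVec_smul, ← h, mulVec_mulVec, nonsing_inv_mul A hA, one_mulVec]
  induction k with
  | zero => simp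
  | succ k ih =>
    rw [pow_succ, ← mulVec_mulVec, hinv, mulVec_smul, ih, smul_smul, pow_succ', mul_inv]

end MMatrix

section Covariance

variable {L : Fin 3 → ℕ}

lemma sum_lap_row [∀ i, NeZero (L i)] (x : Torus L) : ∑ y, lap L x y = 0 := by
  simp only [lap, of_apply, Finset.sum_sub_distrib]
  rw [Finset.sum_comm]
  simp only [Finset.sum_add_distrib, Finset.sum_ite_eq', Finset.mem_univ, if_true,
    Finset.sum_const, Finset.card_univ, Fintype.card_fin]
  norm_num

lemma lap_apply_nonneg {x y : Torus L} (hxy : x ≠ y) : 0 ≤ lap L x y := by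
  simp only [lap, of_apply, if_neg hxy.symm, sub_zero]
  exact Finset.sum_nonneg fun i _ => by positivity

lemma lap_add_right (a x y : Torus L) : lap L (x + a) (y + a) = lap L x y := by
  simp only [lap, of_apply, add_left_inj, add_right_comm x a, add_sub_right_comm]

lemma lap_transpose : (lap L)ᵀ = lap L := by
  ext x y
  have hshift (i : Fin 3) : (x = y + unitVec L i ↔ y = x - unitVec L i) ∧
      (x = y - unitVec L i ↔ y = x + unitVec L i) :=
    ⟨eq_comm.trans eq_sub_iff_add_eq.symm, eq_sub_iff_add_eq.trans eq_comm⟩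
  simp only [lap, of_apply, transpose_apply, hshift, eq_comm (a := x) (b := y)]
  simp only [add_comm]

/-- The eigenvalue of `2 - W²Δ` at the character `ψ` of the torus. -/
def dispersion (W : ℕ) (ψ : AddChar (Torus L) ℂ) : ℝ :=
  2 + (W : ℝ) ^ 2 * ∑ i, (2 - 2 * (ψ (unitVec L i)).re)

lemma dispersion_zero (W : ℕ) : dispersion W (0 : AddChar (Torus L) ℂ) = 2 := by
  simp [dispersion]

variable [∀ i, NeZero (L i)]

/-- The matrix `1 - W²Δ`, whose inverse is the covariance profile `Jmat`. -/
def precision (L : Fin 3 → ℕ) [∀ i, NeZero (L i)] (W : ℕ) : Matrix (Torus L) (Torus L) ℝ :=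
  ((W : ℝ) ^ 2) • (-lap L) + 1

lemma isMMatrix_precision (W : ℕ) : IsMMatrix (precision L W) where
  apply_nonpos x y hxy := by
    have := mul_nonneg (sq_nonneg (W : ℝ)) (lap_apply_nonneg hxy)
    simpa [precision, one_apply_ne hxy] using this
  sum_row_pos x := by
    simp [precision, Finset.sum_add_distrib, ← Finset.mul_sum, sum_lap_row, one_apply]

lemma Jmat_add_right (W : ℕ) (a x y : Torus L) : Jmat L W (x + a) (y + a) = Jmat L W x y := by
  have hinv : (precision L W).submatrix (Equiv.addRight a) (Equiv.addRight a) =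
      precision L W := by
    ext x y
    simp [precision, lap_add_right, one_apply]
  have h := inv_submatrix_equiv (precision L W) (Equiv.addRight a) (Equiv.addRight a)
  rw [hinv] at h
  exact (congrFun₂ h x y).symm

lemma isSymm_Jmat (W : ℕ) : (Jmat L W).IsSymm := by
  rw [IsSymm, Jmat, transpose_nonsing_inv, transpose_add, transpose_smul, transpose_neg,
    lap_transpose, transpose_one]

lemma two_le_dispersion (W : ℕ) (ψ : AddChar (Torus L) ℂ) : 2 ≤ dispersion W ψ := by
  refine le_add_of_nonneg_right (mul_nonneg (sq_nonneg _) (Finset.sum_nonneg fun i _ => ?_))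
  have := (Complex.re_le_norm _).trans_eq (AddChar.norm_apply ψ (unitVec L i))
  linarith

lemma lap_mulVec_addChar (ψ : AddChar (Torus L) ℂ) :
    (lap L).map Complex.ofReal *ᵥ ψ = (∑ i, (2 * (ψ (unitVec L i)).re - 2 : ℂ)) • ⇑ψ := by
  funext x
  have hshift (i : Fin 3) : ψ (x + unitVec L i) + ψ (x - unitVec L i) =
      2 * (ψ (unitVec L i)).re * ψ x := by
    rw [sub_eq_add_neg, AddChar.map_add_eq_mul, AddChar.map_add_eq_mul, ← mul_add,
      AddChar.map_neg_eq_conj, Complex.add_conj, mul_comm]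
    push_cast
    rfl
  have hsum : ((lap L).map Complex.ofReal *ᵥ ψ) x =
      ∑ i, (ψ (x + unitVec L i) + ψ (x - unitVec L i)) - 6 * ψ x := by
    simp only [mulVec, dotProduct, map_apply, lap, of_apply, Complex.ofReal_sub,
      Complex.ofReal_sum, Complex.ofReal_add, sub_mul, Finset.sum_mul, add_mul,
      Finset.sum_sub_distrib, apply_ite Complex.ofReal, Complex.ofReal_one, Complex.ofReal_zero,
      Complex.ofReal_ofNat, ite_mul, one_mul, zero_mul, Finset.sum_ite_eq', Finset.mem_univ,
      if_true]
    rw [Finset.sum_comm]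
    simp only [Finset.sum_add_distrib, Finset.sum_ite_eq', Finset.mem_univ, if_true]
  rw [hsum, Finset.sum_congr rfl fun i _ => hshift i, Pi.smul_apply, smul_eq_mul,
    Finset.sum_sub_distrib, sub_mul, Finset.sum_mul]
  norm_num

lemma precision_add_one_mulVec_addChar (W : ℕ) (ψ : AddChar (Torus L) ℂ) :
    (precision L W + 1).map Complex.ofReal *ᵥ ψ = (dispersion W ψ : ℂ) • ⇑ψ := by
  have hmap : (precision L W + 1).map Complex.ofReal =
      (2 : ℂ) • (1 : Matrix (Torus L) (Torus L) ℂ) -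
        ((W : ℂ) ^ 2) • (lap L).map Complex.ofReal := by
    ext x y
    simp only [precision, map_apply, Matrix.add_apply, Matrix.smul_apply, Matrix.neg_apply,
      Matrix.sub_apply, one_apply, smul_eq_mul]
    split_ifs <;> push_cast <;> ring
  rw [hmap, sub_mulVec, smul_mulVec, smul_mulVec, lap_mulVec_addChar, one_mulVec, smul_smul,
    ← sub_smul, dispersion]
  congr 1
  push_cast
  rw [sub_eq_add_neg, ← mul_neg, ← Finset.sum_neg_distrib]
  simp only [neg_sub]

/-- The character `x ↦ exp (2πi ∑ⱼ pⱼ xⱼ / Lⱼ)` of the torus. -/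
def torusChar (p : Torus L) : AddChar (Torus L) ℂ :=
  ∏ i, (ZMod.stdAddChar.mulShift (p i)).compAddMonoidHom (Pi.evalAddMonoidHom _ i)

lemma torusChar_apply (p x : Torus L) :
    torusChar p x = ∏ i, (ZMod.stdAddChar (p i * x i) : ℂ) := by
  simp [torusChar, AddChar.prod_apply]

lemma torusChar_zero : torusChar (0 : Torus L) = 0 := by
  ext x
  simp [torusChar_apply]

lemma torusChar_unitVec (p : Torus L) (i : Fin 3) :
    torusChar p (unitVec L i) = ZMod.stdAddChar (p i) := by
  rw [torusChar_apply, Finset.prod_eq_single i]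
  · simp [unitVec]
  · intro j _ hj; simp [unitVec, hj]
  · simp

lemma sum_torusChar_apply (x : Torus L) :
    ∑ p : Torus L, torusChar p x = if x = 0 then (Fintype.card (Torus L) : ℂ) else 0 := by
  have hprod : ∑ p : Torus L, torusChar p x =
      ∏ i, ∑ m : ZMod (L i), (ZMod.stdAddChar (m * x i) : ℂ) := by
    rw [Finset.prod_univ_sum]
    simp [torusChar_apply, Fintype.piFinset_univ]
  have hsum (i : Fin 3) : ∑ m : ZMod (L i), (ZMod.stdAddChar (m * x i) : ℂ) =
      if x i = 0 then (Fintype.card (ZMod (L i)) : ℂ) else 0 := by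
    rw [AddChar.sum_mulShift (x i) (ZMod.isPrimitive_stdAddChar (L i))]
    split_ifs <;> simp
  simp_rw [hprod, hsum]
  split_ifs with hx
  · simp [hx, Fintype.card_pi]
  · obtain ⟨i, hi⟩ := Function.ne_iff.1 hx
    exact Finset.prod_eq_zero (Finset.mem_univ i) (if_neg hi)

lemma card_mul_inv_pow_apply (W k : ℕ) (x y : Torus L) :
    Fintype.card (Torus L) * ((precision L W + 1)⁻¹ ^ k) x y =
      ∑ p : Torus L, (dispersion W (torusChar p) ^ k)⁻¹ * (torusChar p (x - y)).re := by
  let φ := Complex.ofRealHom.mapMatrix (m := Torus L)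
  have hdet := (isMMatrix_precision (L := L) W).add_one.isUnit_det
  have hφdet : IsUnit (φ (precision L W + 1)).det := by
    rw [← RingHom.map_det]; exact hdet.map _
  have hφinv : φ (precision L W + 1)⁻¹ = (φ (precision L W + 1))⁻¹ :=
    (inv_eq_left_inv (by rw [← map_mul, nonsing_inv_mul _ hdet, map_one])).symm
  have heig (p : Torus L) : φ ((precision L W + 1)⁻¹ ^ k) *ᵥ torusChar p =
      ((dispersion W (torusChar p) : ℂ) ^ k)⁻¹ • ⇑(torusChar p) := by
    have hne : (dispersion W (torusChar p) : ℂ) ≠ 0 :=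
      Complex.ofReal_ne_zero.2 (two_pos.trans_le (two_le_dispersion W _)).ne'
    rw [map_pow, hφinv]
    exact inv_pow_mulVec_of_mulVec_eq_smul hφdet hne (precision_add_one_mulVec_addChar W _) k
  have hsingle : ∑ p : Torus L, torusChar p (-y) • ⇑(torusChar p) =
      Pi.single y (Fintype.card (Torus L) : ℂ) := by
    funext z
    simp only [Finset.sum_apply, Pi.smul_apply, smul_eq_mul, ← AddChar.map_add_eq_mul,
      sum_torusChar_apply, Pi.single_apply, neg_add_eq_zero, eq_comm]
  have hterm (p : Torus L) : torusChar p (-y) * ((dispersion W (torusChar p) : ℂ) ^ k)⁻¹ *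
      torusChar p x = ((dispersion W (torusChar p) ^ k)⁻¹ : ℝ) * torusChar p (x - y) := by
    rw [sub_eq_add_neg, AddChar.map_add_eq_mul]
    push_cast
    ring
  have hentry : ∑ p : Torus L, ((dispersion W (torusChar p) ^ k)⁻¹ : ℝ) * torusChar p (x - y) =
      ((Fintype.card (Torus L) * ((precision L W + 1)⁻¹ ^ k) x y : ℝ) : ℂ) := by
    have h := congrFun (congrArg (φ ((precision L W + 1)⁻¹ ^ k) *ᵥ ·) hsingle) x
    simp only [mulVec_sum, mulVec_smul, heig, smul_smul, mulVec_single, Finset.sum_apply,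
      Pi.smul_apply, smul_eq_mul, hterm, op_smul_eq_smul] at h
    rw [h, Complex.ofReal_mul]
    rfl
  rw [← Complex.ofReal_re (_ * _), ← hentry, Complex.re_sum]
  simp only [Complex.re_ofReal_mul]

lemma sq_mul_valMinAbs_le {n : ℕ} [NeZero n] (m : ZMod n) :
    16 * (m.valMinAbs : ℝ) ^ 2 ≤ n ^ 2 * (2 - 2 * (ZMod.stdAddChar m : ℂ).re) := by
  have hn : (0 : ℝ) < n := Nat.cast_pos.2 (NeZero.pos n)
  have hre : (ZMod.stdAddChar m : ℂ).re = Real.cos (2 * Real.pi * m.valMinAbs / n) := by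
    conv_lhs => rw [← ZMod.coe_valMinAbs m, ZMod.stdAddChar_coe]
    rw [← Complex.exp_ofReal_mul_I_re]
    congr 2
    push_cast; ring
  have hangle : |2 * Real.pi * (m.valMinAbs : ℝ) / n| ≤ Real.pi := by
    have hval : |(m.valMinAbs : ℝ)| * 2 ≤ n := by
      have : |m.valMinAbs| * 2 ≤ n := by
        rw [← abs_two, ← abs_mul]
        exact abs_le.2 ⟨m.valMinAbs_mem_Ioc.1.le, m.valMinAbs_mem_Ioc.2⟩
      exact_mod_cast this
    rw [abs_div, abs_mul, abs_of_pos hn, abs_of_pos Real.two_pi_pos, div_le_iff₀ hn]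
    nlinarith [Real.pi_pos]
  calc 16 * (m.valMinAbs : ℝ) ^ 2
      = n ^ 2 * (2 * (2 / Real.pi ^ 2 * (2 * Real.pi * m.valMinAbs / n) ^ 2)) := by
        field_simp; ring
    _ ≤ n ^ 2 * (2 - 2 * (ZMod.stdAddChar m : ℂ).re) := by
        have := Real.cos_le_one_sub_mul_cos_sq hangle
        rw [hre]
        gcongr
        linarith

lemma dispersion_torusChar_ge {W : ℕ} (hL : ∀ i, L i ≤ W) (p : Torus L) :
    2 * (1 + 8 * ∑ i, ((p i).valMinAbs : ℝ) ^ 2) ≤ dispersion W (torusChar p) := by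
  have hsum : ∑ i, 16 * ((p i).valMinAbs : ℝ) ^ 2 ≤
      (W : ℝ) ^ 2 * ∑ i, (2 - 2 * (torusChar p (unitVec L i)).re) := by
    rw [Finset.mul_sum]
    refine Finset.sum_le_sum fun i _ => ?_
    rw [torusChar_unitVec]
    have hre := (Complex.re_le_norm _).trans_eq
      (AddChar.norm_apply (ZMod.stdAddChar (N := L i)) (p i))
    refine (sq_mul_valMinAbs_le (p i)).trans (mul_le_mul_of_nonneg_right ?_ (by linarith))
    exact pow_le_pow_left₀ (Nat.cast_nonneg _) (Nat.cast_le.2 (hL i)) 2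
  rw [← Finset.mul_sum] at hsum
  rw [dispersion]
  linarith

lemma sum_Icc_inv_sq_le (K : ℕ) :
    ∑ k ∈ Finset.Icc (-(K : ℤ)) K, ((1 + 8 * (k : ℝ) ^ 2) ^ 2)⁻¹ ≤
      (17 / 16 - 1 / 16 / (K + 1) : ℝ) := by
  induction K with
  | zero => norm_num
  | succ K ih =>
    have hIcc : Finset.Icc (-((K + 1 : ℕ) : ℤ)) ((K + 1 : ℕ) : ℤ) =
        insert (-((K + 1 : ℕ) : ℤ)) (insert ((K + 1 : ℕ) : ℤ) (Finset.Icc (-(K : ℤ)) K)) := by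
      ext k; simp only [Finset.mem_Icc, Finset.mem_insert]; omega
    rw [hIcc, Finset.sum_insert (by simp; omega), Finset.sum_insert (by simp)]
    push_cast
    have hK : (0 : ℝ) ≤ K := Nat.cast_nonneg K
    have htele : 2 * ((1 + 8 * ((K : ℝ) + 1) ^ 2) ^ 2)⁻¹ ≤
        1 / 16 / ((K : ℝ) + 1) - 1 / 16 / ((K : ℝ) + 1 + 1) := by
      rw [← div_eq_mul_inv, div_sub_div _ _ (by positivity) (by positivity),
        div_le_div_iff₀ (by positivity) (by positivity)]
      nlinarith [pow_nonneg hK 2, pow_nonneg hK 3, pow_nonneg hK 4]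
    rw [neg_sq]
    linarith

lemma sum_valMinAbs_inv_sq_le (n : ℕ) [NeZero n] :
    ∑ m : ZMod n, ((1 + 8 * (m.valMinAbs : ℝ) ^ 2) ^ 2)⁻¹ ≤ 17 / 16 := by
  have hsub : Finset.univ.image (fun m : ZMod n => m.valMinAbs) ⊆ Finset.Icc (-(n : ℤ)) n := by
    intro k hk
    obtain ⟨m, -, rfl⟩ := Finset.mem_image.1 hk
    have := m.valMinAbs_mem_Ioc
    simp only [Set.mem_Ioc, Finset.mem_Icc] at this ⊢
    omega
  calc ∑ m : ZMod n, ((1 + 8 * (m.valMinAbs : ℝ) ^ 2) ^ 2)⁻¹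
      = ∑ k ∈ Finset.univ.image fun m : ZMod n => m.valMinAbs,
          ((1 + 8 * (k : ℝ) ^ 2) ^ 2)⁻¹ :=
        (Finset.sum_image (f := fun k : ℤ => ((1 + 8 * (k : ℝ) ^ 2) ^ 2)⁻¹)
          fun _ _ _ _ h => ZMod.injective_valMinAbs h).symm
    _ ≤ ∑ k ∈ Finset.Icc (-(n : ℤ)) n, ((1 + 8 * (k : ℝ) ^ 2) ^ 2)⁻¹ :=
        Finset.sum_le_sum_of_subset_of_nonneg hsub fun _ _ _ => by positivity
    _ ≤ 17 / 16 - 1 / 16 / (n + 1) := sum_Icc_inv_sq_le n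
    _ ≤ 17 / 16 := sub_le_self _ (by positivity)

lemma inv_dispersion_torusChar_pow_le {W : ℕ} (hL : ∀ i, L i ≤ W) (p : Torus L) :
    (dispersion W (torusChar p) ^ 6)⁻¹ ≤
      2⁻¹ ^ 6 * ∏ i, ((1 + 8 * ((p i).valMinAbs : ℝ) ^ 2) ^ 2)⁻¹ := by
  have hprod : ∏ i, (1 + 8 * ((p i).valMinAbs : ℝ) ^ 2) ≤
      (1 + 8 * ∑ i, ((p i).valMinAbs : ℝ) ^ 2) ^ 3 := by
    refine (Finset.prod_le_prod (fun i _ => by positivity) fun i _ => ?_).trans_eq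
      (by rw [Finset.prod_const, Finset.card_univ, Fintype.card_fin])
    gcongr
    exact Finset.single_le_sum (f := fun i => ((p i).valMinAbs : ℝ) ^ 2)
      (fun j _ => by positivity) (Finset.mem_univ i)
  rw [Finset.prod_inv_distrib, Finset.prod_pow, inv_pow, ← mul_inv]
  refine inv_anti₀ (by positivity) ?_
  calc 2 ^ 6 * (∏ i, (1 + 8 * ((p i).valMinAbs : ℝ) ^ 2)) ^ 2
      ≤ 2 ^ 6 * ((1 + 8 * ∑ i, ((p i).valMinAbs : ℝ) ^ 2) ^ 3) ^ 2 := by gcongr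
    _ = (2 * (1 + 8 * ∑ i, ((p i).valMinAbs : ℝ) ^ 2)) ^ 6 := by ring
    _ ≤ dispersion W (torusChar p) ^ 6 := by
      gcongr
      exact dispersion_torusChar_ge hL p

lemma sum_inv_dispersion_torusChar_pow_le {W : ℕ} (hL : ∀ i, L i ≤ W) :
    ∑ p : Torus L, (dispersion W (torusChar p) ^ 6)⁻¹ ≤ 2⁻¹ ^ 6 * (17 / 16) ^ 3 := by
  refine (Finset.sum_le_sum fun p _ => inv_dispersion_torusChar_pow_le hL p).trans ?_
  rw [← Finset.mul_sum, ← Fintype.piFinset_univ,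
    ← Finset.prod_univ_sum (fun i => (Finset.univ : Finset (ZMod (L i))))
      fun i m => ((1 + 8 * ((m : ZMod (L i)).valMinAbs : ℝ) ^ 2) ^ 2)⁻¹]
  gcongr
  refine (Finset.prod_le_prod (fun i _ => Finset.sum_nonneg fun _ _ => by positivity)
    fun i _ => sum_valMinAbs_inv_sq_le (L i)).trans_eq ?_
  rw [Finset.prod_const, Finset.card_univ, Fintype.card_fin]

lemma le_sum_inv_dispersion_mul_torusChar_re {W : ℕ} (hL : ∀ i, L i ≤ W) (x : Torus L) :
    1 / 128 ≤ ∑ p : Torus L, (dispersion W (torusChar p) ^ 6)⁻¹ * (torusChar p x).re := by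
  have hterm (p : Torus L) : -(dispersion W (torusChar p) ^ 6)⁻¹ ≤
      (dispersion W (torusChar p) ^ 6)⁻¹ * (torusChar p x).re := by
    have hpos : 0 < dispersion W (torusChar p) := two_pos.trans_le (two_le_dispersion W _)
    have hre := neg_le_of_abs_le ((Complex.abs_re_le_norm _).trans_eq
      (AddChar.norm_apply (torusChar p) x))
    rw [← mul_neg_one]
    gcongr
  have hsum := sum_inv_dispersion_torusChar_pow_le hL
  have herase := Finset.sum_le_sum (s := Finset.univ.erase (0 : Torus L)) fun p _ => hterm p
  rw [← Finset.add_sum_erase _ _ (Finset.mem_univ (0 : Torus L)), torusChar_zero,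
    dispersion_zero] at hsum ⊢
  rw [Finset.sum_neg_distrib] at herase
  rw [AddChar.zero_apply, Complex.one_re, mul_one]
  linarith

/- The zero mode contributes `2⁻⁶ / N` to the kernel of `(2 - W²Δ)⁻⁶`, and outweighs all the other
modes together. -/
theorem le_Jmat {W : ℕ} (hL : ∀ i, L i ≤ W) (x y : Torus L) :
    1 / 128 / (Fintype.card (Torus L) : ℝ) ≤ Jmat L W x y := by
  have hN : (0 : ℝ) < Fintype.card (Torus L) := Nat.cast_pos.2 Fintype.card_pos
  refine le_trans ?_ ((isMMatrix_precision W).inv_add_one_pow_le_inv 5 x y)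
  rw [div_le_iff₀' hN, card_mul_inv_pow_apply]
  exact le_sum_inv_dispersion_mul_torusChar_re hL (x - y)

end Covariance

section GaussianHermitian

variable {n : Type*} [Fintype n]

/-- The position of an index in an arbitrary enumeration, used to orient the pairs of indices. -/
def enumIdx (i : n) : ℕ := (Fintype.equivFin n i).val

lemma enumIdx_injective : Function.Injective (enumIdx : n → ℕ) :=
  Fin.val_injective.comp (Fintype.equivFin n).injective

lemma enumIdx_trichotomy (i j : n) :
    enumIdx i < enumIdx j ∨ i = j ∨ enumIdx j < enumIdx i := by
  rw [← enumIdx_injective.eq_iff]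
  exact lt_trichotomy _ _

variable [DecidableEq n] {J : Matrix n n ℝ}

/-- The Hermitian matrix with variance profile `J` built linearly from one real Gaussian per ordered
pair: for `i` before `j`, the coordinates `(i, j)` and `(j, i)` are the real and imaginary parts of
the entry `i j`. -/
def gaussHerm (J : Matrix n n ℝ) : (n × n → ℝ) →ₗ[ℝ] Matrix n n ℂ where
  toFun ω := of fun i j =>
    if i = j then ((√(J i i) * ω (i, i) : ℝ) : ℂ)
    else if enumIdx i < enumIdx j then
      ((√(J i j / 2) : ℝ) : ℂ) * ((ω (i, j) : ℂ) + Complex.I * (ω (j, i) : ℂ))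
    else ((√(J i j / 2) : ℝ) : ℂ) * ((ω (j, i) : ℂ) - Complex.I * (ω (i, j) : ℂ))
  map_add' ω ω' := by
    ext i j
    simp only [of_apply, Matrix.add_apply, Pi.add_apply]
    split_ifs <;> push_cast <;> ring
  map_smul' t ω := by
    ext i j
    simp only [of_apply, Matrix.smul_apply, Pi.smul_apply, smul_eq_mul, RingHom.id_apply,
      Complex.real_smul]
    split_ifs <;> push_cast <;> ring

lemma gaussHerm_apply_self (ω : n × n → ℝ) (i : n) :
    gaussHerm J ω i i = ((√(J i i) * ω (i, i) : ℝ) : ℂ) := by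
  simp [gaussHerm]

lemma gaussHerm_apply_of_lt (ω : n × n → ℝ) {i j : n} (h : enumIdx i < enumIdx j) :
    gaussHerm J ω i j =
      ((√(J i j / 2) : ℝ) : ℂ) * ((ω (i, j) : ℂ) + Complex.I * (ω (j, i) : ℂ)) := by
  have hne : i ≠ j := fun e => by simp [e] at h
  simp [gaussHerm, hne, h]

lemma gaussHerm_apply_of_gt (ω : n × n → ℝ) {i j : n} (h : enumIdx j < enumIdx i) :
    gaussHerm J ω i j =
      ((√(J i j / 2) : ℝ) : ℂ) * ((ω (j, i) : ℂ) - Complex.I * (ω (i, j) : ℂ)) := by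
  have hne : i ≠ j := fun e => by simp [e] at h
  simp [gaussHerm, hne, not_lt.2 h.le]

lemma isHermitian_gaussHerm (hJ : J.IsSymm) (ω : n × n → ℝ) : (gaussHerm J ω).IsHermitian := by
  ext i j
  rw [conjTranspose_apply]
  obtain h | rfl | h := enumIdx_trichotomy i j
  · rw [gaussHerm_apply_of_lt ω h, gaussHerm_apply_of_gt ω h, hJ.apply]
    simp
  · simp [gaussHerm_apply_self]
  · rw [gaussHerm_apply_of_gt ω h, gaussHerm_apply_of_lt ω h, hJ.apply]
    simp [sub_eq_add_neg]

lemma gaussHerm_apply_congr {ω ω' : n × n → ℝ} {i j : n} (hij : ω (i, j) = ω' (i, j))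
    (hji : ω (j, i) = ω' (j, i)) : gaussHerm J ω i j = gaussHerm J ω' i j := by
  obtain h | rfl | h := enumIdx_trichotomy i j
  · simp only [gaussHerm_apply_of_lt _ h, hij, hji]
  · simp only [gaussHerm_apply_self, hij]
  · simp only [gaussHerm_apply_of_gt _ h, hij, hji]

lemma continuous_gaussHerm : Continuous (gaussHerm J) :=
  LinearMap.continuous_of_finiteDimensional _

lemma measurable_resolvent_gaussHerm {α : Type*} [MeasurableSpace α] {f : α → n × n → ℝ}
    {z : α → ℂ} (hf : Measurable f) (hz : Measurable z) (i j : n) :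
    Measurable fun a => resolvent (gaussHerm J (f a)) (z a) i j :=
  measurable_resolvent_apply (fun j k =>
    ((continuous_gaussHerm.matrix_elem j k).measurable.comp hf)) hz i j

/-- The coordinates of a Hermitian matrix in the parametrization `gaussHerm J`. -/
def gaussCoords (J : Matrix n n ℝ) (B : Matrix n n ℂ) (e : n × n) : ℝ :=
  if e.1 = e.2 then (B e.1 e.1).re / √(J e.1 e.1)
  else if enumIdx e.1 < enumIdx e.2 then (B e.1 e.2).re / √(J e.1 e.2 / 2)
  else (B e.2 e.1).im / √(J e.2 e.1 / 2)

lemma gaussCoords_self (B : Matrix n n ℂ) (i : n) :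
    gaussCoords J B (i, i) = (B i i).re / √(J i i) := by
  simp [gaussCoords]

lemma gaussCoords_of_lt (B : Matrix n n ℂ) {i j : n} (h : enumIdx i < enumIdx j) :
    gaussCoords J B (i, j) = (B i j).re / √(J i j / 2) := by
  have hne : i ≠ j := fun e => by simp [e] at h
  simp [gaussCoords, hne, h]

lemma gaussCoords_of_gt (B : Matrix n n ℂ) {i j : n} (h : enumIdx j < enumIdx i) :
    gaussCoords J B (i, j) = (B j i).im / √(J j i / 2) := by
  have hne : i ≠ j := fun e => by simp [e] at h
  simp [gaussCoords, hne, not_lt.2 h.le]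

lemma measurable_gaussCoords {α : Type*} [MeasurableSpace α] {F : α → Matrix n n ℂ}
    (hF : ∀ i j, Measurable fun a => F a i j) : Measurable fun a => gaussCoords J (F a) := by
  refine measurable_pi_iff.2 fun ⟨i, j⟩ => ?_
  obtain h | rfl | h := enumIdx_trichotomy i j
  · simp only [gaussCoords_of_lt _ h]; fun_prop
  · simp only [gaussCoords_self]; fun_prop
  · simp only [gaussCoords_of_gt _ h]; fun_prop

lemma gaussHerm_gaussCoords (hJ : J.IsSymm) (hpos : ∀ i j, 0 < J i j) {B : Matrix n n ℂ}
    (hB : B.IsHermitian) : gaussHerm J (gaussCoords J B) = B := by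
  have hlt (i j : n) (h : enumIdx i < enumIdx j) :
      gaussHerm J (gaussCoords J B) i j = B i j := by
    have hne : (√(J i j / 2) : ℂ) ≠ 0 :=
      Complex.ofReal_ne_zero.2 (Real.sqrt_pos.2 (half_pos (hpos i j))).ne'
    rw [gaussHerm_apply_of_lt _ h, gaussCoords_of_lt _ h, gaussCoords_of_gt _ h]
    conv_rhs => rw [← Complex.re_add_im (B i j)]
    push_cast
    field_simp
  ext i j
  obtain h | rfl | h := enumIdx_trichotomy i j
  · exact hlt i j h
  · rw [gaussHerm_apply_self, gaussCoords_self,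
      mul_div_cancel₀ _ (Real.sqrt_pos.2 (hpos i i)).ne']
    exact hB.coe_re_apply_self i
  · rw [← (isHermitian_gaussHerm hJ _).apply, hlt j i h, hB.apply]

lemma sum_gaussCoords_sq (hJ : J.IsSymm) (hpos : ∀ i j, 0 < J i j) {B : Matrix n n ℂ}
    (hB : B.IsHermitian) : ∑ e, gaussCoords J B e ^ 2 = ∑ i, ∑ j, ‖B i j‖ ^ 2 / J i j := by
  have hnorm (i j : n) : ‖B j i‖ = ‖B i j‖ := by rw [← hB.apply j i, norm_star]
  have hlt (i j : n) (h : enumIdx i < enumIdx j) :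
      gaussCoords J B (i, j) ^ 2 + gaussCoords J B (j, i) ^ 2 =
        ‖B i j‖ ^ 2 / J i j + ‖B j i‖ ^ 2 / J j i := by
    rw [gaussCoords_of_lt _ h, gaussCoords_of_gt _ h, div_pow, div_pow,
      Real.sq_sqrt (half_pos (hpos i j)).le, hnorm i j, hJ.apply j i, Complex.sq_norm,
      Complex.normSq_apply]
    field_simp
    ring
  have hpair (i j : n) : gaussCoords J B (i, j) ^ 2 + gaussCoords J B (j, i) ^ 2 =
      ‖B i j‖ ^ 2 / J i j + ‖B j i‖ ^ 2 / J j i := by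
    obtain h | rfl | h := enumIdx_trichotomy i j
    · exact hlt i j h
    · rw [gaussCoords_self, div_pow, Real.sq_sqrt (hpos i i).le, ← hB.coe_re_apply_self i]
      simp
    · rw [add_comm, hlt j i h, add_comm]
  have hsum := Finset.sum_congr (rfl : Finset.univ = Finset.univ) fun i _ =>
    Finset.sum_congr (rfl : Finset.univ = Finset.univ) fun j _ => hpair i j
  simp only [Finset.sum_add_distrib] at hsum
  rw [Finset.sum_comm (f := fun i j => gaussCoords J B (j, i) ^ 2),
    Finset.sum_comm (f := fun i j => ‖B j i‖ ^ 2 / J j i)] at hsum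
  rw [Fintype.sum_prod_type]
  linarith

lemma sum_gaussCoords_sq_le (hJ : J.IsSymm) {a : ℝ} (ha : 0 < a) (haJ : ∀ i j, a ≤ J i j)
    {B : Matrix n n ℂ} (hB : B.IsHermitian) :
    ∑ e, gaussCoords J B e ^ 2 ≤ (∑ i, ∑ j, ‖B i j‖ ^ 2) / a := by
  rw [sum_gaussCoords_sq hJ (fun i j => ha.trans_le (haJ i j)) hB]
  simp only [Finset.sum_div]
  gcongr
  exact haJ _ _

lemma sum_gaussCoords_smul_one_sq_le (hJ : J.IsSymm) {a : ℝ} (ha : 0 < a)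
    (haJ : ∀ i j, a ≤ J i j) (u : ℝ) :
    ∑ e, gaussCoords J (u • 1) e ^ 2 ≤ Fintype.card n * u ^ 2 / a := by
  have hentry (i j : n) : ‖(u • 1 : Matrix n n ℂ) i j‖ ^ 2 = if i = j then u ^ 2 else 0 := by
    by_cases h : i = j <;> simp [h, one_apply]
  refine (sum_gaussCoords_sq_le hJ ha haJ (isHermitian_one.smul (IsSelfAdjoint.all u))).trans_eq ?_
  simp only [hentry, Finset.sum_ite_eq, Finset.mem_univ, if_true, Finset.sum_const, nsmul_eq_mul,
    Finset.card_univ]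

lemma sum_norm_sq_rankTwo {i : n} {u : n → ℂ} (hui : u i = 0) (ζ : ℂ) :
    ∑ j, ∑ k, ‖rankTwo i u ζ j k‖ ^ 2 = 2 * ‖ζ‖ ^ 2 * ∑ j, ‖u j‖ ^ 2 := by
  have hentry (j k : n) : ‖rankTwo i u ζ j k‖ ^ 2 =
      (if k = i then ‖ζ‖ ^ 2 * ‖u j‖ ^ 2 else 0) + if j = i then ‖ζ‖ ^ 2 * ‖u k‖ ^ 2 else 0 := by
    by_cases hk : k = i <;> by_cases hj : j = i <;> simp [rankTwo_apply, hk, hj, hui, mul_pow]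
  simp only [hentry, Finset.sum_add_distrib, Finset.sum_ite_eq', Finset.mem_univ, if_true]
  rw [Finset.sum_comm]
  simp only [Finset.sum_ite_eq', Finset.mem_univ, if_true, ← Finset.mul_sum]
  ring

lemma IsMinorEigenpair.sum_gaussCoords_rankTwo_sq_le {M : Matrix n n ℂ} {i : n} {β : ℝ} {u : n → ℂ}
    (h : IsMinorEigenpair M i β u) (hJ : J.IsSymm) {a : ℝ} (ha : 0 < a) (haJ : ∀ i j, a ≤ J i j)
    (ζ : ℂ) : ∑ e, gaussCoords J (rankTwo i u ζ) e ^ 2 ≤ 2 * ‖ζ‖ ^ 2 / a := by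
  refine (sum_gaussCoords_sq_le hJ ha haJ (isHermitian_rankTwo i u ζ)).trans_eq ?_
  rw [sum_norm_sq_rankTwo h.apply_self, h.sum_norm_sq, mul_one]

lemma gaussCoords_rankTwo_eq_zero {i : n} (u : n → ℂ) (ζ : ℂ) {e : n × n}
    (he : ¬ (e.1 = i ∨ e.2 = i)) : gaussCoords J (rankTwo i u ζ) e = 0 := by
  obtain ⟨h1, h2⟩ := not_or.1 he
  simp [gaussCoords, rankTwo_apply, h1, h2]

end GaussianHermitian

section PermutationInvariance

variable {n : Type*} [Fintype n] {σ : Equiv.Perm n} {i j : n}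

/-- `σ` preserves the enumeration order of `i` and `j`. -/
def PreservesOrder (σ : Equiv.Perm n) (i j : n) : Prop :=
  enumIdx i < enumIdx j ↔ enumIdx (σ i) < enumIdx (σ j)

lemma PreservesOrder.symm (h : PreservesOrder σ i j) : PreservesOrder σ j i := by
  obtain rfl | hij := eq_or_ne i j
  · exact h
  have hne := enumIdx_injective.ne hij
  have hσne := enumIdx_injective.ne (σ.injective.ne hij)
  unfold PreservesOrder at *
  omega

open Classical in
/-- The permutation of the real coordinates of `gaussHerm J` induced, up to the signs
`coordSign σ`, by the permutation `σ` of the indices. -/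
def coordPerm (σ : Equiv.Perm n) (e : n × n) : n × n :=
  if PreservesOrder σ e.1 e.2 then (σ e.1, σ e.2) else (σ e.2, σ e.1)

lemma coordPerm_injective (σ : Equiv.Perm n) : Function.Injective (coordPerm σ) := by
  rintro ⟨i, j⟩ ⟨i', j'⟩ h
  simp only [coordPerm] at h
  split_ifs at h with h1 h2 h2 <;> simp only [Prod.mk.injEq, σ.injective.eq_iff] at h <;>
    obtain ⟨rfl, rfl⟩ := h
  · rfl
  · exact absurd h1.symm h2
  · exact absurd h2.symm h1
  · rfl

open Classical in
/-- The sign is `-1` at the imaginary part of an entry that `σ` moves across the diagonal, where it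
gets conjugated. -/
def coordSign (σ : Equiv.Perm n) (e : n × n) : ℝ :=
  if enumIdx e.2 < enumIdx e.1 ∧ ¬ PreservesOrder σ e.1 e.2 then -1 else 1

variable [DecidableEq n] {J : Matrix n n ℝ}

lemma gaussHerm_coordPerm (hJ : J.IsSymm) (hσ : ∀ i j, J (σ i) (σ j) = J i j) (ω : n × n → ℝ) :
    gaussHerm J (fun e => coordSign σ e * ω (coordPerm σ e)) = (gaussHerm J ω).submatrix σ σ := by
  have hlt (i j : n) (h : enumIdx i < enumIdx j) :
      gaussHerm J (fun e => coordSign σ e * ω (coordPerm σ e)) i j = gaussHerm J ω (σ i) (σ j) := by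
    rw [gaussHerm_apply_of_lt _ h]
    by_cases hs : PreservesOrder σ i j
    · rw [gaussHerm_apply_of_lt _ (hs.1 h), hσ]
      simp [coordSign, coordPerm, hs, hs.symm]
    · have hs' : ¬ PreservesOrder σ j i := fun h => hs h.symm
      have hgt : enumIdx (σ j) < enumIdx (σ i) := by
        have hne := enumIdx_injective.ne (σ.injective.ne fun e : i = j => by simp [e] at h)
        unfold PreservesOrder at hs
        omega
      rw [gaussHerm_apply_of_gt _ hgt, hσ]
      simp [coordSign, coordPerm, hs, hs', h, not_lt.2 h.le, sub_eq_add_neg]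
  ext i j
  rw [submatrix_apply]
  obtain h | rfl | h := enumIdx_trichotomy i j
  · exact hlt i j h
  · simp [gaussHerm_apply_self, coordSign, coordPerm, PreservesOrder, hσ]
  · rw [← (isHermitian_gaussHerm hJ _).apply, hlt j i h, (isHermitian_gaussHerm hJ _).apply]

lemma resolvent_submatrix_equiv (M : Matrix n n ℂ) (z : ℂ) (σ : Equiv.Perm n) :
    resolvent (M.submatrix σ σ) z = (resolvent M z).submatrix σ σ := by
  rw [resolvent_eq_nonsing_inv, resolvent_eq_nonsing_inv, ← inv_submatrix_equiv, submatrix_sub,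
    submatrix_smul]
  simp only [Pi.sub_apply, Pi.smul_apply, submatrix_one_equiv]

/-- The random variable `-Im` of the diagonal entry `i` of the resolvent of `gaussHerm J` at
`E + iε`, which is positive. -/
def negImResolvent (J : Matrix n n ℝ) (ε : ℝ) (i : n) (E : ℝ) (ω : n × n → ℝ) : ℝ≥0∞ :=
  ENNReal.ofReal (-(resolvent (gaussHerm J ω) (E + ε * Complex.I) i i).im)

lemma measurable_uncurry_negImResolvent (J : Matrix n n ℝ) (ε : ℝ) (i : n) :
    Measurable (Function.uncurry (negImResolvent J ε i)) :=
  (measurable_resolvent_gaussHerm measurable_snd (by fun_prop) i i).im.neg.ennreal_ofReal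

lemma measurable_negImResolvent (J : Matrix n n ℝ) (ε : ℝ) (i : n) (E : ℝ) :
    Measurable (negImResolvent J ε i E) :=
  (measurable_uncurry_negImResolvent J ε i).of_uncurry_left

/-- The mean of `negImResolvent`, which is `π` times the mean local density of states at `i`. -/
def meanNegIm (J : Matrix n n ℝ) (ε : ℝ) (i : n) (E : ℝ) : ℝ≥0∞ :=
  ∫⁻ ω, negImResolvent J ε i E ω ∂stdGauss (n × n)

lemma measurable_meanNegIm (J : Matrix n n ℝ) (ε : ℝ) (i : n) : Measurable (meanNegIm J ε i) :=
  (measurable_uncurry_negImResolvent J ε i).lintegral_prod_right'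

lemma meanNegIm_apply_perm (hJ : J.IsSymm) (hσ : ∀ i j, J (σ i) (σ j) = J i j) (ε : ℝ) (i : n)
    (E : ℝ) : meanNegIm J ε (σ i) E = meanNegIm J ε i E := by
  have hpres := measurePreserving_stdGauss_signed_perm
    (Equiv.ofBijective _ (Finite.injective_iff_bijective.1 (coordPerm_injective σ)))
    (s := coordSign σ) fun e => by unfold coordSign; split_ifs <;> simp
  rw [meanNegIm, meanNegIm, ← hpres.lintegral_comp (measurable_negImResolvent J ε i E)]
  simp only [negImResolvent, Equiv.ofBijective_apply, gaussHerm_coordPerm hJ hσ,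
    resolvent_submatrix_equiv, submatrix_apply]

end PermutationInvariance

section WegnerEstimate

variable {n : Type*} [Fintype n]

lemma IsMinorEigenpair.neg {M : Matrix n n ℂ} {i : n} {β : ℝ} {u : n → ℂ}
    (h : IsMinorEigenpair M i β u) : IsMinorEigenpair M i β (-u) where
  sum_norm_sq := by simpa using h.sum_norm_sq
  apply_self := by simpa using h.apply_self
  mulVec_apply j hj := by rw [mulVec_neg, Pi.neg_apply, h.mulVec_apply j hj]; simp

variable [DecidableEq n] {J : Matrix n n ℝ} {a : ℝ}

lemma measurable_gaussCoords_rankTwo (J : Matrix n n ℝ) (i : n) (u : n → ℂ) :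
    Measurable fun ζ => gaussCoords J (rankTwo i u ζ) := by
  refine measurable_gaussCoords fun j k => ?_
  simp only [rankTwo_apply]
  refine Measurable.add ?_ ?_ <;> split_ifs <;> fun_prop

lemma resolvent_add_smul_one (M : Matrix n n ℂ) (z : ℂ) (u : ℝ) :
    resolvent (M + u • 1) z = resolvent M (z - u) := by
  rw [resolvent_eq_nonsing_inv, resolvent_eq_nonsing_inv, sub_smul, sub_sub,
    add_comm M, Complex.coe_smul]

lemma two_mul_meanNegIm_le (hJ : J.IsSymm) (ha : 0 < a) (haJ : ∀ i j, a ≤ J i j) {u R : ℝ}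
    (hR : Fintype.card n * u ^ 2 / a ≤ 2 * R) (ε : ℝ) (i : n) (E : ℝ) :
    2 * meanNegIm J ε i E ≤
      ENNReal.ofReal (Real.exp R) * (meanNegIm J ε i (E - u) + meanNegIm J ε i (E + u)) := by
  have hcoords : gaussHerm J (gaussCoords J (u • 1)) = u • 1 :=
    gaussHerm_gaussCoords hJ (fun i j => ha.trans_le (haJ i j))
      (isHermitian_one.smul (IsSelfAdjoint.all u))
  refine (lintegral_stdGauss_le_translates
    ((sum_gaussCoords_smul_one_sq_le hJ ha haJ u).trans hR)
    (measurable_negImResolvent J ε i E)).trans_eq ?_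
  simp only [negImResolvent, map_add, map_sub, hcoords]
  simp only [sub_eq_add_neg, ← neg_smul, resolvent_add_smul_one]
  simp only [meanNegIm, negImResolvent, Complex.ofReal_neg, Complex.ofReal_add, neg_neg,
    add_right_comm]

lemma setLIntegral_Icc_neg_self_comp_add (f : ℝ → ℝ≥0∞) (E s : ℝ) :
    ∫⁻ u in Set.Icc (-s) s, f (E + u) = ∫⁻ t in Set.Icc (E - s) (E + s), f t := by
  have h := (measurePreserving_add_left volume E).setLIntegral_comp_preimage_emb
    (measurableEmbedding_addLeft E) f (Set.Icc (E - s) (E + s))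
  rwa [Set.preimage_const_add_Icc, sub_sub_cancel_left, add_sub_cancel_left] at h

lemma setLIntegral_Icc_neg_self_comp_sub (f : ℝ → ℝ≥0∞) (E s : ℝ) :
    ∫⁻ u in Set.Icc (-s) s, f (E - u) = ∫⁻ t in Set.Icc (E - s) (E + s), f t := by
  have h := (Measure.measurePreserving_sub_left volume E).setLIntegral_comp_preimage_emb
    (MeasurableEquiv.subLeft E).measurableEmbedding f (Set.Icc (E - s) (E + s))
  rwa [Set.preimage_const_sub_Icc, sub_add_cancel_left, sub_sub_cancel] at h

theorem two_mul_mul_meanNegIm_le_setLIntegral (hJ : J.IsSymm) (ha : 0 < a)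
    (haJ : ∀ i j, a ≤ J i j) {s R : ℝ} (hR : Fintype.card n * s ^ 2 / a ≤ 2 * R)
    (ε : ℝ) (i : n) (E : ℝ) :
    ENNReal.ofReal (2 * s) * meanNegIm J ε i E ≤
      ENNReal.ofReal (Real.exp R) * ∫⁻ t in Set.Icc (E - s) (E + s), meanNegIm J ε i t := by
  have hmeas := measurable_meanNegIm J ε i
  refine (ENNReal.mul_le_mul_iff_right two_ne_zero ENNReal.ofNat_ne_top).1 ?_
  calc 2 * (ENNReal.ofReal (2 * s) * meanNegIm J ε i E)
      = ∫⁻ _u in Set.Icc (-s) s, 2 * meanNegIm J ε i E := by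
        rw [setLIntegral_const, Real.volume_Icc, sub_neg_eq_add, ← two_mul s]; ring
    _ ≤ ∫⁻ u in Set.Icc (-s) s, ENNReal.ofReal (Real.exp R) *
          (meanNegIm J ε i (E - u) + meanNegIm J ε i (E + u)) := by
        refine setLIntegral_mono' measurableSet_Icc fun u hu =>
          two_mul_meanNegIm_le hJ ha haJ (le_trans ?_ hR) ε i E
        gcongr ?_ / a
        exact mul_le_mul_of_nonneg_left (sq_le_sq' hu.1 hu.2) (Nat.cast_nonneg _)
    _ = 2 * (ENNReal.ofReal (Real.exp R) *
          ∫⁻ t in Set.Icc (E - s) (E + s), meanNegIm J ε i t) := by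
        rw [lintegral_const_mul _ (by fun_prop), lintegral_add_left (by fun_prop),
          setLIntegral_Icc_neg_self_comp_sub, setLIntegral_Icc_neg_self_comp_add]
        ring

/-- The samples whose matrix has an eigenvalue within `r` of `m` in its minor at `i`. -/
def minorResonance (J : Matrix n n ℝ) (i : n) (m r : ℝ) : Set (n × n → ℝ) :=
  {ω | HasMinorEigenvalueNear (gaussHerm J ω) i m r}

lemma measurableSet_minorResonance (J : Matrix n n ℝ) (i : n) (m r : ℝ) :
    MeasurableSet (minorResonance J i m r) :=
  ((isClosed_setOf_hasMinorEigenvalueNear i m r).preimage continuous_gaussHerm).measurableSet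

lemma gaussHerm_apply_congr_of_ne {ω ω' : n × n → ℝ} {i : n}
    (h : ∀ e : n × n, ¬ (e.1 = i ∨ e.2 = i) → ω e = ω' e) (j k : n) (hj : j ≠ i) (hk : k ≠ i) :
    gaussHerm J ω j k = gaussHerm J ω' j k :=
  gaussHerm_apply_congr (h (j, k) (by simp [hj, hk])) (h (k, j) (by simp [hj, hk]))

lemma volume_ball_sqrt (ha : 0 < a) :
    volume (Metric.ball (0 : ℂ) √a) = ENNReal.ofReal (Real.pi * a) := by
  rw [Complex.volume_ball, ← ENNReal.ofReal_pow (Real.sqrt_nonneg a), Real.sq_sqrt ha.le, mul_comm,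
    ENNReal.ofReal_mul Real.pi_pos.le, ← NNReal.coe_real_pi, ENNReal.ofReal_coe_nnreal]

lemma IsMinorEigenpair.setLIntegral_negImResolvent_rankTwo_le {ω : n × n → ℝ} {i : n} {β : ℝ}
    {u : n → ℂ} (h : IsMinorEigenpair (gaussHerm J ω) i β u) (hJ : J.IsSymm)
    (hpos : ∀ i j, 0 < J i j) {E d ε : ℝ} (hd : |β - E| ≤ d) (hε : 0 < ε) (s : Set ℂ) :
    let bound := ENNReal.ofReal √ε * (ENNReal.ofReal Real.pi * (∫⁻ t, singularWeight t) +
      volume s) + ENNReal.ofReal (Real.pi ^ 2 * d)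
    ∫⁻ ζ in s, negImResolvent J ε i E (ω + gaussCoords J (rankTwo i u ζ)) ≤ bound ∧
      ∫⁻ ζ in s, negImResolvent J ε i E (ω - gaussCoords J (rankTwo i u ζ)) ≤ bound := by
  have hcoords (ζ : ℂ) : gaussHerm J (gaussCoords J (rankTwo i u ζ)) = rankTwo i u ζ :=
    gaussHerm_gaussCoords hJ hpos (isHermitian_rankTwo i u ζ)
  have hbound {u' : n → ℂ} (h' : IsMinorEigenpair (gaussHerm J ω) i β u') :=
    (h'.setLIntegral_neg_im_resolvent_add_rankTwo_le (isHermitian_gaussHerm hJ ω) E hε s).trans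
      (add_le_add_right (ENNReal.ofReal_le_ofReal (mul_le_mul_of_nonneg_left hd (sq_nonneg _))) _)
  simp only [negImResolvent, map_add, map_sub, hcoords, sub_eq_add_neg (gaussHerm J ω),
    ← rankTwo_neg]
  exact ⟨hbound h, hbound h.neg⟩

lemma volume_ball_mul_setLIntegral_minorResonance_le (hJ : J.IsSymm) (ha : 0 < a)
    (haJ : ∀ i j, a ≤ J i j) (i : n) {E E' r s ε : ℝ} (hE : |E' - E| ≤ s) (hε : 0 < ε) :
    volume (Metric.ball (0 : ℂ) √a) * ∫⁻ ω in minorResonance J i E r,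
        negImResolvent J ε i E' ω ∂stdGauss (n × n) ≤
      ENNReal.ofReal (Real.exp 1) * (ENNReal.ofReal √ε * (ENNReal.ofReal Real.pi *
        (∫⁻ t, singularWeight t) + volume (Metric.ball (0 : ℂ) √a)) +
          ENNReal.ofReal (Real.pi ^ 2 * (r + s))) := by
  have hmeas := measurableSet_minorResonance J i E r
  rw [← lintegral_indicator hmeas, ← Measure.restrict_apply_univ (Metric.ball _ _)]
  refine measure_univ_mul_lintegral_stdGauss_le_of_local (fun e : n × n => e.1 = i ∨ e.2 = i)
    ((measurable_negImResolvent J ε i E').indicator hmeas) fun ω₀ => ?_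
  by_cases hω₀ : ω₀ ∈ minorResonance J i E r
  · obtain ⟨β, u, hβ, hu⟩ := hω₀
    have hβE' : |β - E'| ≤ r + s := by
      rw [abs_sub_comm] at hE
      exact (abs_sub_le β E E').trans (add_le_add hβ hE)
    refine ⟨fun ζ => gaussCoords J (rankTwo i u ζ), measurable_gaussCoords_rankTwo J i u,
      fun ζ _ => gaussCoords_rankTwo_eq_zero u ζ, ?_, fun ω hω => ?_⟩
    · refine ae_restrict_of_forall_mem Metric.isOpen_ball.measurableSet fun ζ hζ =>
        (hu.sum_gaussCoords_rankTwo_sq_le hJ ha haJ ζ).trans ?_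
      rw [mem_ball_zero_iff, Real.lt_sqrt (norm_nonneg _)] at hζ
      rw [mul_div_assoc]
      gcongr
      exact (div_le_one ha).2 hζ.le
    · have huω := hu.congr (gaussHerm_apply_congr_of_ne fun e he => (hω e he).symm)
      rw [Measure.restrict_apply_univ]
      exact (huω.setLIntegral_negImResolvent_rankTwo_le hJ (fun i j => ha.trans_le (haJ i j)) hβE'
        hε _).imp (lintegral_mono fun ζ => Set.indicator_le_self _ _ _).trans
        (lintegral_mono fun ζ => Set.indicator_le_self _ _ _).trans
  · refine ⟨fun _ => 0, measurable_const, fun _ _ _ => rfl, by simp, fun ω hω => ?_⟩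
    have hω' : ω ∉ minorResonance J i E r := fun h =>
      hω₀ (HasMinorEigenvalueNear.congr h (gaussHerm_apply_congr_of_ne hω))
    simp [hω']

/-- The mass of `singularWeight` as a real number. -/
def singularMass : ℝ := (∫⁻ t, singularWeight t).toReal

theorem setLIntegral_minorResonance_le (hJ : J.IsSymm) (ha : 0 < a) (haJ : ∀ i j, a ≤ J i j)
    (i : n) {E E' r s ε : ℝ} (hE : |E' - E| ≤ s) (hr : 0 ≤ r) (hε : 0 < ε) :
    ∫⁻ ω in minorResonance J i E r,
        negImResolvent J ε i E' ω ∂stdGauss (n × n) ≤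
      ENNReal.ofReal (Real.exp 1 * (√ε * (singularMass / a + 1) + Real.pi * (r + s) / a)) := by
  have hs : 0 ≤ s := (abs_nonneg _).trans hE
  have h := volume_ball_mul_setLIntegral_minorResonance_le hJ ha haJ i (r := r) hE hε
  have hπa : ENNReal.ofReal (Real.pi * a) ≠ 0 := (ENNReal.ofReal_pos.2 (by positivity)).ne'
  rw [volume_ball_sqrt ha, ← ENNReal.ofReal_toReal lintegral_singularWeight_ne_top,
    ← ENNReal.ofReal_mul Real.pi_pos.le, ← ENNReal.ofReal_add (by positivity) (by positivity),
    ← ENNReal.ofReal_mul (by positivity), ← ENNReal.ofReal_add (by positivity) (by positivity),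
    ← ENNReal.ofReal_mul (by positivity)] at h
  refine (ENNReal.mul_le_mul_iff_right hπa ENNReal.ofReal_ne_top).1 (h.trans_eq ?_)
  rw [← ENNReal.ofReal_mul (by positivity)]
  congr 1
  rw [singularMass]
  field_simp

lemma setLIntegral_sum_negImResolvent_le (hJ : J.IsSymm) (E : ℝ) {s ε : ℝ} (hs : 0 < s)
    (hε : 0 < ε) (ω : n × n → ℝ) :
    ∫⁻ t in Set.Icc (E - s) (E + s), ∑ i, negImResolvent J ε i t ω ≤
      ENNReal.ofReal Real.pi + Fintype.card n * ENNReal.ofReal (2 * ε / s) +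
        ∫⁻ t in Set.Icc (E - s) (E + s),
          ∑ i, (minorResonance J i E (2 * s)).indicator (negImResolvent J ε i t) ω := by
  obtain h | h := setLIntegral_sum_neg_im_resolvent_diag_le_or (isHermitian_gaussHerm hJ ω) E hs hε
  · exact le_add_right h
  · have hω (i : n) : ω ∈ minorResonance J i E (2 * s) := h i
    simp only [Set.indicator_of_mem (hω _)]
    exact le_add_self

theorem sum_setLIntegral_meanNegIm_le (hJ : J.IsSymm) (ha : 0 < a) (haJ : ∀ i j, a ≤ J i j)
    (E : ℝ) {s ε : ℝ} (hs : 0 < s) (hε : 0 < ε) :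
    ∑ i, ∫⁻ t in Set.Icc (E - s) (E + s), meanNegIm J ε i t ≤
      ENNReal.ofReal Real.pi + Fintype.card n * ENNReal.ofReal (2 * ε / s) +
        Fintype.card n * (ENNReal.ofReal (2 * s) * ENNReal.ofReal
          (Real.exp 1 * (√ε * (singularMass / a + 1) + Real.pi * (2 * s + s) / a))) := by
  let γ := stdGauss (n × n)
  let window := volume.restrict (Set.Icc (E - s) (E + s))
  let resonant (i : n) (t : ℝ) := (minorResonance J i E (2 * s)).indicator (negImResolvent J ε i t)
  let C := ENNReal.ofReal
    (Real.exp 1 * (√ε * (singularMass / a + 1) + Real.pi * (2 * s + s) / a))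
  have hres (i : n) : Measurable (Function.uncurry (resonant i)) :=
    (measurable_uncurry_negImResolvent J ε i).indicator
      ((measurableSet_minorResonance J i E (2 * s)).preimage measurable_snd)
  have hmean (i : n) : Measurable fun t => ∫⁻ ω, resonant i t ω ∂γ := (hres i).lintegral_prod_right'
  have hle (i : n) : ∫⁻ t, (∫⁻ ω, resonant i t ω ∂γ) ∂window ≤ ENNReal.ofReal (2 * s) * C := by
    refine (setLIntegral_mono' (g := fun _ => C) measurableSet_Icc fun t ht => ?_).trans_eq ?_
    · rw [lintegral_indicator (measurableSet_minorResonance J i E (2 * s))]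
      exact setLIntegral_minorResonance_le hJ ha haJ i
        (abs_sub_le_iff.2 ⟨by linarith [ht.2], by linarith [ht.1]⟩) (by positivity) hε
    · rw [setLIntegral_const, Real.volume_Icc, add_sub_sub_cancel, ← two_mul, mul_comm]
  calc ∑ i, ∫⁻ t, meanNegIm J ε i t ∂window
      = ∫⁻ ω, (∫⁻ t, ∑ i, negImResolvent J ε i t ω ∂window) ∂γ := by
        rw [← lintegral_finsetSum _ fun i _ => measurable_meanNegIm J ε i,
          ← lintegral_lintegral_swap (Finset.measurable_fun_sum _ fun i _ =>
            measurable_uncurry_negImResolvent J ε i).aemeasurable]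
        refine lintegral_congr fun t => ?_
        rw [lintegral_finsetSum _ fun i _ => measurable_negImResolvent J ε i t]
        rfl
    _ ≤ ∫⁻ ω, (ENNReal.ofReal Real.pi + Fintype.card n * ENNReal.ofReal (2 * ε / s) +
          ∫⁻ t, ∑ i, resonant i t ω ∂window) ∂γ :=
        lintegral_mono fun ω => setLIntegral_sum_negImResolvent_le hJ E hs hε ω
    _ = ENNReal.ofReal Real.pi + Fintype.card n * ENNReal.ofReal (2 * ε / s) +
          ∑ i, ∫⁻ t, (∫⁻ ω, resonant i t ω ∂γ) ∂window := by
        rw [lintegral_add_left measurable_const, lintegral_const, measure_univ, mul_one,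
          ← lintegral_lintegral_swap
            (Finset.measurable_fun_sum _ fun i _ => hres i).aemeasurable,
          ← lintegral_finsetSum _ fun i _ => hmean i]
        simp only [lintegral_finsetSum _ fun i _ => (hres i).of_uncurry_left]
    _ ≤ _ := by
        refine add_le_add_right ((Finset.sum_le_card_nsmul _ _ _ fun i _ => hle i).trans_eq ?_) _
        rw [Finset.card_univ, nsmul_eq_mul]

theorem meanNegIm_le_of_homogeneous [Nonempty n] (hJ : J.IsSymm) {c : ℝ} (hc : 0 < c)
    (hcJ : ∀ i j, c / Fintype.card n ≤ J i j)
    (hhom : ∀ i j, ∃ σ : Equiv.Perm n, σ i = j ∧ ∀ k l, J (σ k) (σ l) = J k l)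
    (i : n) (E : ℝ) {ε : ℝ} (hε : 0 < ε) :
    meanNegIm J ε i E ≤ ENNReal.ofReal (Real.exp (1 / (2 * c)) * (Real.pi / 2 +
      Fintype.card n ^ 2 * ε + Real.exp 1 *
        (√ε * (singularMass * Fintype.card n / c + 1) + 3 * Real.pi / c))) := by
  have hmass : 0 ≤ singularMass := ENNReal.toReal_nonneg
  set N := (Fintype.card n : ℝ) with hN
  have hN0 : 0 < N := Nat.cast_pos.2 Fintype.card_pos
  have hNcast : (Fintype.card n : ℝ≥0∞) = ENNReal.ofReal N := (ENNReal.ofReal_natCast _).symm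
  have hconst (j : n) : meanNegIm J ε j E = meanNegIm J ε i E := by
    obtain ⟨σ, rfl, hσ⟩ := hhom i j
    exact meanNegIm_apply_perm hJ hσ ε i E
  have hwindow := Finset.sum_le_sum fun j (_ : j ∈ Finset.univ) =>
    two_mul_mul_meanNegIm_le_setLIntegral hJ (div_pos hc hN0) hcJ (s := 1 / N)
      (R := 1 / (2 * c)) (le_of_eq (by rw [← hN]; field_simp)) ε j E
  have hmean := sum_setLIntegral_meanNegIm_le hJ (div_pos hc hN0) hcJ E (one_div_pos.2 hN0) hε
  simp only [hconst, Finset.sum_const, Finset.card_univ, nsmul_eq_mul, ← Finset.mul_sum]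
    at hwindow
  have h := hwindow.trans (mul_le_mul_right hmean _)
  rw [hNcast, ← mul_assoc, ← ENNReal.ofReal_mul hN0.le, ← ENNReal.ofReal_mul hN0.le,
    ← ENNReal.ofReal_mul (by positivity), ← ENNReal.ofReal_mul hN0.le,
    ← ENNReal.ofReal_add (by positivity) (by positivity),
    ← ENNReal.ofReal_add (by positivity) (by positivity),
    ← ENNReal.ofReal_mul (by positivity)] at h
  have h2 : ENNReal.ofReal (N * (2 * (1 / N))) ≠ 0 := (ENNReal.ofReal_pos.2 (by positivity)).ne'
  refine (ENNReal.mul_le_mul_iff_right h2 ENNReal.ofReal_ne_top).1 (h.trans_eq ?_)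
  rw [← ENNReal.ofReal_mul (by positivity)]
  congr 1
  field_simp
  ring

end WegnerEstimate

section HolomorphicIntegrals

lemma aestronglyMeasurable_deriv_of_eventually {𝕜 E α : Type*} [NontriviallyNormedField 𝕜]
    [NormedAddCommGroup E] [NormedSpace 𝕜 E] [MeasurableSpace α] {μ : Measure α} {F : 𝕜 → α → E}
    {z₀ : 𝕜} (hF : ∀ᶠ z in 𝓝 z₀, AEStronglyMeasurable (F z) μ)
    (hd : ∀ᵐ a ∂μ, DifferentiableAt 𝕜 (F · a) z₀) :
    AEStronglyMeasurable (fun a => deriv (F · a) z₀) μ := by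
  have hF' : ∀ᶠ z in 𝓝[≠] z₀, AEStronglyMeasurable (F z) μ := hF.filter_mono nhdsWithin_le_nhds
  obtain ⟨z, hz, hFz⟩ := exists_seq_forall_of_frequently hF'.frequently
  refine aestronglyMeasurable_of_tendsto_ae atTop (f := fun k a => slope (F · a) z₀ (z k))
    (fun k => ((hFz k).sub hF.self_of_nhds).const_smul (z k - z₀)⁻¹) ?_
  filter_upwards [hd] with a ha using ha.hasDerivAt.tendsto_slope.comp hz

variable {E α : Type*} [NormedAddCommGroup E] [NormedSpace ℂ E] [MeasurableSpace α] {μ : Measure α}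

theorem differentiableAt_integral_of_locally_dominated {F : ℂ → α → E} {b : α → ℝ} {z₀ : ℂ}
    {s : Set ℂ} (hs : s ∈ 𝓝 z₀) (hF : ∀ z ∈ s, AEStronglyMeasurable (F z) μ)
    (hd : ∀ᵐ a ∂μ, DifferentiableOn ℂ (F · a) s) (hb : Integrable b μ)
    (hFb : ∀ᵐ a ∂μ, ∀ z ∈ s, ‖F z a‖ ≤ b a) :
    DifferentiableAt ℂ (fun z => ∫ a, F z a ∂μ) z₀ := by
  obtain ⟨r, hr, hrs⟩ := Metric.mem_nhds_iff.1 hs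
  have hdisc {z : ℂ} (hz : z ∈ Metric.ball z₀ (r / 2)) : Metric.closedBall z (r / 2) ⊆ s := by
    refine (Metric.closedBall_subset_ball' ?_).trans hrs
    linarith [Metric.mem_ball.1 hz]
  have hnhds {z : ℂ} (hz : z ∈ Metric.ball z₀ (r / 2)) : s ∈ 𝓝 z :=
    mem_of_superset (Metric.closedBall_mem_nhds z (half_pos hr)) (hdisc hz)
  have hFint : Integrable (F z₀) μ :=
    hb.mono' (hF z₀ (mem_of_mem_nhds hs)) (hFb.mono fun a ha => ha z₀ (mem_of_mem_nhds hs))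
  have hderiv := aestronglyMeasurable_deriv_of_eventually (eventually_of_mem hs hF)
    (hd.mono fun a ha => ha.differentiableAt hs)
  refine (hasDerivAt_integral_of_dominated_loc_of_deriv_le (F' := fun z a => deriv (F · a) z)
    (Metric.ball_mem_nhds z₀ (half_pos hr)) (eventually_of_mem hs hF) hFint hderiv ?_
    (hb.div_const (r / 2)) ?_).2.differentiableAt
  -- Cauchy's estimate turns the bound on `F` into a bound on its derivative.
  · filter_upwards [hd, hFb] with a hda hFba z hz
    exact Complex.norm_deriv_le_of_forall_mem_sphere_norm_le (half_pos hr)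
      ((hda.mono (Metric.closure_ball_subset_closedBall.trans (hdisc hz))).diffContOnCl)
      fun w hw => hFba w (hdisc hz (Metric.sphere_subset_closedBall hw))
  · filter_upwards [hd] with a hda z hz using (hda.differentiableAt (hnhds hz)).hasDerivAt

lemma differentiable_integral_cexp_mul {X : α → ℝ} {g : α → ℂ} {C : ℝ}
    (hX : ∀ t : ℝ, Integrable (fun a => Real.exp (t * X a)) μ) (hg : AEStronglyMeasurable g μ)
    (hgC : ∀ a, ‖g a‖ ≤ C) :
    Differentiable ℂ fun z : ℂ => ∫ a, Complex.exp (z * X a) * g a ∂μ := by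
  intro z₀
  have hXm : AEMeasurable X μ := aemeasurable_of_integrable_exp_mul zero_ne_one (hX 0) (hX 1)
  let R := ‖z₀‖ + 1
  refine differentiableAt_integral_of_locally_dominated
    (b := fun a => (Real.exp (R * X a) + Real.exp (-R * X a)) * C)
    (Metric.ball_mem_nhds z₀ one_pos) (fun z _ => ?_)
    (Eventually.of_forall fun a => by fun_prop) (((hX R).add (hX (-R))).mul_const C)
    (Eventually.of_forall fun a z hz => ?_)
  · exact ((hXm.complex_ofReal.const_mul z).cexp.aestronglyMeasurable).mul hg
  · have hzR : |z.re| ≤ R := by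
      have hz' : ‖z - z₀‖ < 1 := by rwa [← mem_ball_iff_norm]
      linarith [Complex.abs_re_le_norm z, norm_le_norm_add_norm_sub' z z₀]
    rw [norm_mul, Complex.norm_exp, Complex.re_mul_ofReal, neg_mul]
    gcongr
    · calc Real.exp (z.re * X a) ≤ Real.exp |R * X a| := by
            refine Real.exp_le_exp.2 ((le_abs_self _).trans ?_)
            rw [abs_mul, abs_mul]
            exact mul_le_mul_of_nonneg_right (hzR.trans (le_abs_self R)) (abs_nonneg _)
        _ ≤ _ := Real.exp_abs_le _
    · exact hgC a

lemma eqOn_of_eq_add_ofReal [CompleteSpace E] {f g : ℂ → E} {U : Set ℂ} (hU : IsOpen U)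
    (hU' : IsPreconnected U) (hf : DifferentiableOn ℂ f U) (hg : DifferentiableOn ℂ g U) {z₀ : ℂ}
    (hz₀ : z₀ ∈ U) (h : ∀ t : ℝ, f (z₀ + t) = g (z₀ + t)) : Set.EqOn f g U := by
  refine (hf.analyticOnNhd hU).eqOn_of_preconnected_of_frequently_eq (hg.analyticOnNhd hU) hU'
    hz₀ ?_
  have hline : Tendsto (fun t : ℝ => z₀ + t) (𝓝[≠] 0) (𝓝[≠] z₀) := by
    have hcont : Continuous fun t : ℝ => z₀ + t := by fun_prop
    have htends := hcont.continuousWithinAt.tendsto_nhdsWithin (x := 0) (s := {0}ᶜ) (t := {z₀}ᶜ)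
      fun t ht => by simpa using ht
    simpa using htends
  exact hline.frequently (Frequently.of_forall h)

end HolomorphicIntegrals

section MeanResolvent

variable {n : Type*} [Fintype n] [DecidableEq n] {J : Matrix n n ℝ}

open scoped Matrix.Norms.L2Operator in
lemma differentiableAt_resolvent_apply {M : Matrix n n ℂ} {z : ℂ} (hz : z ∈ resolventSet ℂ M)
    (i j : n) : DifferentiableAt ℂ (fun z => resolvent M z i j) z :=
  (entryLinearMap ℂ ℂ i j).toContinuousLinearMap.differentiableAt.comp z
    (spectrum.hasDerivAt_resolvent_const_left hz).differentiableAt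

/-- The mean of the diagonal entry `i` of the resolvent of `gaussHerm J` at `z`. -/
def meanResolvent (J : Matrix n n ℝ) (i : n) (z : ℂ) : ℂ :=
  ∫ ω, resolvent (gaussHerm J ω) z i i ∂stdGauss (n × n)

lemma differentiableOn_meanResolvent (hJ : J.IsSymm) (i : n) :
    DifferentiableOn ℂ (meanResolvent J i) {z | 0 < z.im} := by
  intro z (hz : 0 < z.im)
  have hs : {w : ℂ | z.im / 2 < w.im} ∈ 𝓝 z :=
    (isOpen_lt continuous_const Complex.continuous_im).mem_nhds (half_lt_self hz)
  refine (differentiableAt_integral_of_locally_dominated (b := fun _ => 1 / (z.im / 2)) hs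
    (fun w _ => (measurable_resolvent_gaussHerm measurable_id measurable_const i
      i).aestronglyMeasurable) (Eventually.of_forall fun ω w hw => ?_) (integrable_const _)
    (Eventually.of_forall fun ω w hw => ?_)).differentiableWithinAt
  · exact (differentiableAt_resolvent_apply (mem_resolventSet_of_im_pos (isHermitian_gaussHerm hJ ω)
      ((half_pos hz).trans hw)) i i).differentiableWithinAt
  · exact (norm_resolvent_diag_le (isHermitian_gaussHerm hJ ω) ((half_pos hz).trans hw) i).trans
      (one_div_le_one_div_of_le (half_pos hz) (le_of_lt hw))

lemma meanResolvent_sub_ofReal (hJ : J.IsSymm) (hpos : ∀ i j, 0 < J i j) (i : n) (z : ℂ) (t : ℝ) :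
    let v := gaussCoords J 1
    meanResolvent J i (z - t) = Complex.exp (-(t ^ 2 * ((∑ e, v e ^ 2 : ℝ) / 2))) *
      ∫ ω, Complex.exp (t * (∑ e, v e * ω e : ℝ)) * resolvent (gaussHerm J ω) z i i
        ∂stdGauss (n × n) := by
  intro v
  have hshift (ω : n × n → ℝ) :
      resolvent (gaussHerm J ω) (z - t) = resolvent (gaussHerm J (ω + t • v)) z := by
    rw [map_add, map_smul, gaussHerm_gaussCoords hJ hpos isHermitian_one, resolvent_add_smul_one]
  simp only [meanResolvent, hshift]
  rw [integral_comp_add_stdGauss (f := fun ω => resolvent (gaussHerm J ω) z i i) (t • v)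
    (measurable_resolvent_gaussHerm measurable_id measurable_const i i).stronglyMeasurable,
    ← integral_const_mul]
  refine integral_congr_ae (Eventually.of_forall fun ω => ?_)
  have hsq : ∑ e, (t • v) e ^ 2 = t ^ 2 * ∑ e, v e ^ 2 := by
    simp [Finset.mul_sum, mul_pow]
  have hlin : ∑ e, (t • v) e * ω e = t * ∑ e, v e * ω e := by
    simp [Finset.mul_sum, mul_assoc]
  simp only [cameronMartinDensity_eq, hsq, hlin, Complex.real_smul]
  push_cast
  ring_nf

theorem exists_differentiable_eqOn_meanResolvent (hJ : J.IsSymm) (hpos : ∀ i j, 0 < J i j)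
    (i : n) : ∃ Φ : ℂ → ℂ, Differentiable ℂ Φ ∧ Set.EqOn (meanResolvent J i) Φ {z | 0 < z.im} := by
  have hI : 0 < Complex.I.im := by simp
  let v := gaussCoords J 1
  let Ψ : ℂ → ℂ := fun w => Complex.exp (-(w ^ 2 * ((∑ e, v e ^ 2 : ℝ) / 2))) *
    ∫ ω, Complex.exp (w * (∑ e, v e * ω e : ℝ)) * resolvent (gaussHerm J ω) Complex.I i i
      ∂stdGauss (n × n)
  have hexp (t : ℝ) : Integrable (fun ω => Real.exp (t * ∑ e, v e * ω e)) (stdGauss (n × n)) := by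
    simpa [Finset.mul_sum, mul_assoc] using integrable_exp_linear_stdGauss (t • v)
  have hΨ : Differentiable ℂ Ψ := Differentiable.mul (by fun_prop) <|
    differentiable_integral_cexp_mul hexp
      (measurable_resolvent_gaussHerm measurable_id measurable_const i i).aestronglyMeasurable
      fun ω => norm_resolvent_diag_le (isHermitian_gaussHerm hJ ω) hI i
  have hΦ : Differentiable ℂ fun z => Ψ (Complex.I - z) := hΨ.comp (by fun_prop)
  refine ⟨_, hΦ, eqOn_of_eq_add_ofReal (isOpen_lt continuous_const Complex.continuous_im)
    (convex_halfSpace_im_gt 0).isPreconnected (differentiableOn_meanResolvent hJ i)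
    hΦ.differentiableOn hI fun t => ?_⟩
  simpa [Ψ] using meanResolvent_sub_ofReal hJ hpos i Complex.I (-t)

lemma exists_tendsto_meanResolvent (hJ : J.IsSymm) (hpos : ∀ i j, 0 < J i j) (i : n) (E : ℝ) :
    ∃ l, Tendsto (fun ε : ℝ => meanResolvent J i (E + ε * Complex.I)) (𝓝[>] 0) (𝓝 l) := by
  obtain ⟨Φ, hΦ, hmean⟩ := exists_differentiable_eqOn_meanResolvent hJ hpos i
  have hcont : Continuous fun ε : ℝ => Φ (E + ε * Complex.I) := hΦ.continuous.comp (by fun_prop)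
  refine ⟨_, ((hcont.tendsto 0).mono_left nhdsWithin_le_nhds).congr' ?_⟩
  filter_upwards [self_mem_nhdsWithin] with ε hε
  exact (hmean (by simpa using hε)).symm

lemma neg_im_meanResolvent_eq_toReal (hJ : J.IsSymm) (i : n) (E : ℝ) {ε : ℝ} (hε : 0 < ε) :
    -(meanResolvent J i (E + ε * Complex.I)).im = (meanNegIm J ε i E).toReal := by
  have hz : 0 < (E + ε * Complex.I : ℂ).im := by simpa using hε
  have hint : Integrable (fun ω => resolvent (gaussHerm J ω) (E + ε * Complex.I) i i)
      (stdGauss (n × n)) :=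
    .of_bound (measurable_resolvent_gaussHerm measurable_id measurable_const i
      i).aestronglyMeasurable _
      (Eventually.of_forall fun ω => norm_resolvent_diag_le (isHermitian_gaussHerm hJ ω) hz i)
  calc -(meanResolvent J i (E + ε * Complex.I)).im
      = ∫ ω, -(resolvent (gaussHerm J ω) (E + ε * Complex.I) i i).im ∂stdGauss (n × n) := by
        rw [integral_neg]
        exact congrArg Neg.neg (Complex.imCLM.integral_comp_comm hint).symm
    _ = (meanNegIm J ε i E).toReal :=
        integral_eq_lintegral_of_nonneg_ae
          (Eventually.of_forall fun ω =>
            (neg_im_resolvent_diag_pos (isHermitian_gaussHerm hJ ω) hz i).le)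
          hint.im.neg.aestronglyMeasurable

end MeanResolvent

section DensityOfStates

theorem exists_tendsto_im_meanResolvent_abs_le {n : Type*} [Fintype n] [DecidableEq n] [Nonempty n]
    {J : Matrix n n ℝ} (hJ : J.IsSymm) {c : ℝ} (hc : 0 < c)
    (hcJ : ∀ i j, c / Fintype.card n ≤ J i j)
    (hhom : ∀ i j, ∃ σ : Equiv.Perm n, σ i = j ∧ ∀ k l, J (σ k) (σ l) = J k l) (i : n) (E : ℝ) :
    ∃ ρ, Tendsto (fun ε : ℝ => -(meanResolvent J i (E + ε * Complex.I)).im) (𝓝[>] 0) (𝓝 ρ) ∧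
      |ρ| ≤ Real.exp (1 / (2 * c)) * (Real.pi / 2 + 3 * Real.pi * Real.exp 1 / c) := by
  let bound (ε : ℝ) := Real.exp (1 / (2 * c)) * (Real.pi / 2 + Fintype.card n ^ 2 * ε +
    Real.exp 1 * (√ε * (singularMass * Fintype.card n / c + 1) + 3 * Real.pi / c))
  have hpos (j k : n) : 0 < J j k :=
    (div_pos hc (Nat.cast_pos.2 Fintype.card_pos)).trans_le (hcJ j k)
  obtain ⟨l, hl⟩ := exists_tendsto_meanResolvent hJ hpos i E
  have hρ := ((Complex.continuous_im.tendsto l).comp hl).neg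
  have hbound : Tendsto bound (𝓝[>] 0) (𝓝 (bound 0)) :=
    ((by fun_prop : Continuous bound).tendsto 0).mono_left nhdsWithin_le_nhds
  refine ⟨_, hρ, ?_⟩
  have hnonneg : 0 ≤ -l.im := by
    refine ge_of_tendsto hρ ?_
    filter_upwards [self_mem_nhdsWithin] with ε hε
    exact (neg_im_meanResolvent_eq_toReal hJ i E hε).symm ▸ ENNReal.toReal_nonneg
  have hle : -l.im ≤ bound 0 := by
    refine le_of_tendsto_of_tendsto hρ hbound ?_
    filter_upwards [self_mem_nhdsWithin] with ε (hε : 0 < ε)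
    refine (neg_im_meanResolvent_eq_toReal hJ i E hε).trans_le (ENNReal.toReal_le_of_le_ofReal ?_
      (meanNegIm_le_of_homogeneous hJ hc hcJ hhom i E hε))
    have hmass : 0 ≤ singularMass := ENNReal.toReal_nonneg
    positivity
  rw [abs_of_nonneg hnonneg]
  refine hle.trans_eq ?_
  simp only [bound, mul_zero, add_zero, Real.sqrt_zero, zero_mul, zero_add]
  ring

variable (L : Fin 3 → ℕ) [∀ i, NeZero (L i)] (W : ℕ)

lemma avgGreen_apply_self (E ε : ℝ) (x : Torus L) :
    avgGreen L W E ε x x = meanResolvent (Jmat L W) x (E + ε * Complex.I) := by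
  simp only [meanResolvent, resolvent_eq_nonsing_inv]
  rfl

lemma dos_eq_neg_im_meanResolvent_div (E ε : ℝ) :
    dos L W E ε = -(meanResolvent (Jmat L W) 0 (E + ε * Complex.I)).im / Real.pi := by
  rw [dos, avgGreen_apply_self]
  ring

end DensityOfStates

theorem dos_bounded_cube_general :
    ∃ K : ℝ, 0 < K ∧
      ∀ (W : ℕ) (L : Fin 3 → ℕ) [∀ i, NeZero (L i)], (∀ i, L i ≤ W) →
      ∀ E : ℝ,
        ∃ ρΛ : ℝ,
          Tendsto (fun ε : ℝ => dos L W E ε) (𝓝[>] (0 : ℝ)) (𝓝 ρΛ) ∧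
          |ρΛ| ≤ K := by
  refine ⟨Real.exp 64 * (1 / 2 + 384 * Real.exp 1), by positivity, fun W L _ hL E => ?_⟩
  have hhom (x y : Torus L) : ∃ σ : Equiv.Perm (Torus L), σ x = y ∧
      ∀ z w, Jmat L W (σ z) (σ w) = Jmat L W z w :=
    ⟨Equiv.addRight (y - x), add_sub_cancel x y, Jmat_add_right W (y - x)⟩
  obtain ⟨ρ, hρ, hρ_le⟩ := exists_tendsto_im_meanResolvent_abs_le (isSymm_Jmat W)
    (by norm_num : (0 : ℝ) < 1 / 128) (le_Jmat hL) hhom 0 E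
  refine ⟨ρ / Real.pi, ?_, ?_⟩
  · simpa only [dos_eq_neg_im_meanResolvent_div] using hρ.div_const Real.pi
  · rw [abs_div, abs_of_pos Real.pi_pos, div_le_iff₀ Real.pi_pos]
    refine hρ_le.trans_eq ?_
    norm_num
    ring

/-- On a single cube of side `W`, the averaged density of states is bounded
uniformly in `W` and `Λ` for `E ∈ 𝓘`. -/
theorem dos_bounded_cube (η : ℝ) (hη : 0 < η) :
    ∃ (W₀ : ℕ) (K : ℝ), 0 < K ∧
      ∀ (W : ℕ), W₀ ≤ W →
      ∀ (L : Fin 3 → ℕ) [∀ i, NeZero (L i)], (∀ i, L i = W) →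
      ∀ E ∈ specI η,
        ∃ ρΛ : ℝ,
          Tendsto (fun ε : ℝ => dos L W E ε) (𝓝[>] (0 : ℝ)) (𝓝 ρΛ) ∧
          |ρΛ| ≤ K := by
  obtain ⟨K, hK, hdos⟩ := dos_bounded_cube_general
  exact ⟨0, K, hK, fun W _ L _ hL E _ => hdos W L (fun i => (hL i).le) E⟩
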